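/- Let q ≤ k and k+p ≤ n be positive integers, set m = p+q−1, and let w ∈ Sₙ. Then in Hₙ, 𝔖_w · 𝔖_{h[k;p,q]} = Σ_γ 𝔖_{end(γ)}, the sum (with multiplicity) over all paths γ: w = w⁽⁰⁾, w⁽¹⁾, …, w⁽ᵐ⁾ of length m in the k-Bruhat order starting at w whose labels satisfy w⁽¹⁾(a₁) < ⋯ < w⁽ᵖ⁾(a_p) and w⁽ᵖ⁾(a_p) > w⁽ᵖ⁺¹⁾(a_{p+1}) > ⋯ > w⁽ᵐ⁾(a_m), where end(γ) = w⁽ᵐ⁾. The same identity holds with the sum instead taken over all such paths whose labels satisfy w⁽¹⁾(a₁) > ⋯ > w⁽q⁾(a_q) and w⁽q⁾(a_q) < ⋯ < w⁽ᵐ⁾(a_m). -/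

import Mathlib

open Equiv MvPolynomial

attribute [local instance] Classical.propDecidable

namespace SchubertPieri

/-- Position `j ∈ {1,…,N}` (1-indexed) as an element of `Fin N` (0-indexed). -/
def pos (N : ℕ) [NeZero N] (j : ℕ) : Fin N :=
  ⟨(j - 1) % N, Nat.mod_lt _ (Nat.pos_of_ne_zero (NeZero.ne N))⟩

/-- The transposition `t_{a,b}` interchanging positions `a` and `b` (1-indexed). -/
def t (N : ℕ) [NeZero N] (a b : ℕ) : Equiv.Perm (Fin N) :=
  Equiv.swap (pos N a) (pos N b)

/-- The value `w(j)` for `j ∈ {1,…,N}` (1-indexed). -/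
def val {N : ℕ} [NeZero N] (w : Equiv.Perm (Fin N)) (j : ℕ) : ℕ :=
  (w (pos N j) : ℕ) + 1

/-- The length of `w`: its number of inversions. -/
def len {N : ℕ} (w : Equiv.Perm (Fin N)) : ℕ :=
  (Finset.univ.filter fun p : Fin N × Fin N => p.1 < p.2 ∧ w p.2 < w p.1).card

/-- The longest permutation `w₀ : j ↦ N+1-j`. -/
def w0 (N : ℕ) : Equiv.Perm (Fin N) :=
  ⟨Fin.rev, Fin.rev, Fin.rev_rev, Fin.rev_rev⟩

/-- The product `t_{a 0, b 0} ⋯ t_{a (i-1), b (i-1)}`. -/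
def tProd (N : ℕ) [NeZero N] (a b : ℕ → ℕ) (i : ℕ) : Equiv.Perm (Fin N) :=
  ((List.range i).map fun j => t N (a j) (b j)).prod

/-- `r[k,m] = t_{k,k+1} t_{k,k+2} ⋯ t_{k,k+m}`, the (m+1)-cycle with
`r[k,m](k) = k+m` and `r[k,m](j) = j-1` for `k+1 ≤ j ≤ k+m`. -/
def rPerm (N k m : ℕ) [NeZero N] : Equiv.Perm (Fin N) :=
  ((List.range m).map fun i => t N k (k + 1 + i)).prod

/-- `c[k,m] = t_{k,k+1} t_{k-1,k+1} ⋯ t_{k-m+1,k+1}`, the (m+1)-cycle with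
`c[k,m](j) = j+1` for `k-m+1 ≤ j ≤ k` and `c[k,m](k+1) = k-m+1`. -/
def cPerm (N k m : ℕ) [NeZero N] : Equiv.Perm (Fin N) :=
  ((List.range m).map fun i => t N (k - i) (k + 1)).prod

/-- The conditions that `aᵢ ≤ k < bᵢ` (with all indices in `{1,…,N}`) and that
`ℓ(w t_{a₁ b₁} ⋯ t_{aᵢ bᵢ}) = ℓ(w) + i` for `1 ≤ i ≤ m`. -/
def StepOK (N k m : ℕ) [NeZero N] (w : Equiv.Perm (Fin N)) (a b : ℕ → ℕ) : Prop :=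
  (∀ i, i < m → 1 ≤ a i ∧ a i ≤ k ∧ k < b i ∧ b i ≤ N) ∧
  (∀ i, i ≤ m → len (w * tProd N a b i) = len w + i)

/-- `w →_{r[k,m]} w'`. -/
def RelR (N k m : ℕ) [NeZero N] (w w' : Equiv.Perm (Fin N)) : Prop :=
  ∃ a b : ℕ → ℕ, StepOK N k m w a b ∧ w' = w * tProd N a b m ∧
    (∀ i j, i < m → j < m → i ≠ j → b i ≠ b j)

/-- `w →_{c[k,m]} w'`. -/
def RelC (N k m : ℕ) [NeZero N] (w w' : Equiv.Perm (Fin N)) : Prop :=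
  ∃ a b : ℕ → ℕ, StepOK N k m w a b ∧ w' = w * tProd N a b m ∧
    (∀ i j, i < m → j < m → i ≠ j → a i ≠ a j)

/-- The divided difference operator `∂ᵢ f = (f - sᵢ·f)/(xᵢ - xᵢ₊₁)` (1-indexed `i`);
the quotient is exact, and is recovered here as the (unique) witness of divisibility. -/
noncomputable def divDiff {N : ℕ} [NeZero N] (i : ℕ) (f : MvPolynomial (Fin N) ℤ) :
    MvPolynomial (Fin N) ℤ :=
  if h : (X (pos N i) - X (pos N (i + 1))) ∣ (f - rename (⇑(t N i (i + 1))) f) then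
    h.choose
  else 0

/-- `∂_{a₁} ∘ ⋯ ∘ ∂_{a_p}` applied to `f`, for a word `l = [a₁,…,a_p]`. -/
noncomputable def divDiffWord {N : ℕ} [NeZero N] (l : List ℕ) (f : MvPolynomial (Fin N) ℤ) :
    MvPolynomial (Fin N) ℤ :=
  l.foldr divDiff f

/-- Auxiliary: produce a reduced word for `w` by repeatedly removing a descent. -/
def redWordAux (N : ℕ) [NeZero N] : ℕ → Equiv.Perm (Fin N) → List ℕ
  | 0, _ => []
  | fuel + 1, w =>
    match ((List.range (N - 1)).map (· + 1)).find? (fun i => decide (val w (i + 1) < val w i)) with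
    | none => []
    | some i => redWordAux N fuel (w * t N i (i + 1)) ++ [i]

/-- A canonical reduced word `(a₁,…,a_p)` for `w`, i.e. `w = s_{a₁} ⋯ s_{a_p}` with `p = ℓ(w)`. -/
def redWord (N : ℕ) [NeZero N] (w : Equiv.Perm (Fin N)) : List ℕ :=
  redWordAux N (N * N) w

/-- The staircase monomial `x₁^{N-1} x₂^{N-2} ⋯ x_{N-1}`. -/
noncomputable def staircase (N : ℕ) : MvPolynomial (Fin N) ℤ :=
  ∏ i : Fin N, X i ^ (N - 1 - (i : ℕ))

/-- The Schubert polynomial `𝔖_w = ∂_{w⁻¹w₀}(x₁^{N-1} ⋯ x_{N-1})`. -/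
noncomputable def schubertPoly (N : ℕ) [NeZero N] (w : Equiv.Perm (Fin N)) :
    MvPolynomial (Fin N) ℤ :=
  divDiffWord (redWord N (w⁻¹ * w0 N)) (staircase N)

/-- The ideal of `Rₙ` generated by the symmetric polynomials with zero constant term. -/
noncomputable def symIdeal (N : ℕ) : Ideal (MvPolynomial (Fin N) ℤ) :=
  Ideal.span {f : MvPolynomial (Fin N) ℤ | f.IsSymmetric ∧ constantCoeff f = 0}

/-- The ring `Hₙ = Rₙ/𝒮`. -/
abbrev HRing (N : ℕ) := MvPolynomial (Fin N) ℤ ⧸ symIdeal N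

/-- The class of the Schubert polynomial `𝔖_w` in `Hₙ`. -/
noncomputable def SS (N : ℕ) [NeZero N] (w : Equiv.Perm (Fin N)) : HRing N :=
  Ideal.Quotient.mk (symIdeal N) (schubertPoly N w)

/-- The complete homogeneous symmetric polynomial of degree `m` in `x₁,…,x_k`. -/
noncomputable def hPoly (N k m : ℕ) : MvPolynomial (Fin N) ℤ :=
  ∑ s ∈ (Finset.univ.filter fun i : Fin N => (i : ℕ) < k).sym m,
    (Multiset.map X (s : Multiset (Fin N))).prod

/-- The elementary symmetric polynomial of degree `m` in `x₁,…,x_k`. -/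
noncomputable def ePoly (N k m : ℕ) : MvPolynomial (Fin N) ℤ :=
  ∑ s ∈ (Finset.univ.filter fun i : Fin N => (i : ℕ) < k).powersetCard m, ∏ i ∈ s, X i

/-- Covering relation of the `k`-Bruhat order. -/
def kCover (N k : ℕ) [NeZero N] (w w' : Equiv.Perm (Fin N)) : Prop :=
  ∃ a b : ℕ, 1 ≤ a ∧ a ≤ k ∧ k < b ∧ b ≤ N ∧ w' = w * t N a b ∧ len w' = len w + 1

/-- The (strict) `k`-Bruhat order `<ₖ`. -/
def kBruhat (N k : ℕ) [NeZero N] : Equiv.Perm (Fin N) → Equiv.Perm (Fin N) → Prop :=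
  Relation.TransGen (kCover N k)

/-- The label `w⁽ⁱ⁺¹⁾(a_{i+1})` (0-indexed `i`) of the `(i+1)`-st step of a path. -/
def label {N : ℕ} [NeZero N] (w : Equiv.Perm (Fin N)) (a b : ℕ → ℕ) (i : ℕ) : ℕ :=
  val (w * tProd N a b (i + 1)) (a i)

/-- `(a,b)` encodes a path of length `m` in the `k`-Bruhat order from `w` to `w'`
(normalized so that `a i = b i = 0` for `i ≥ m`, making the encoding unique). -/
def PathWit (N k m : ℕ) [NeZero N] (w w' : Equiv.Perm (Fin N))
    (ab : (ℕ → ℕ) × (ℕ → ℕ)) : Prop :=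
  StepOK N k m w ab.1 ab.2 ∧ w' = w * tProd N ab.1 ab.2 m ∧
    ∀ i, m ≤ i → ab.1 i = 0 ∧ ab.2 i = 0

/-- Paths of length `m` in the `k`-Bruhat order from `w` to `w'` with strictly
increasing labels. -/
def IncPaths (N k m : ℕ) [NeZero N] (w w' : Equiv.Perm (Fin N)) :
    Set ((ℕ → ℕ) × (ℕ → ℕ)) :=
  {ab | PathWit N k m w w' ab ∧
    ∀ i j, i < j → j < m → label w ab.1 ab.2 i < label w ab.1 ab.2 j}

/-- Paths of length `m` in the `k`-Bruhat order from `w` to `w'` with strictly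
decreasing labels. -/
def DecPaths (N k m : ℕ) [NeZero N] (w w' : Equiv.Perm (Fin N)) :
    Set ((ℕ → ℕ) × (ℕ → ℕ)) :=
  {ab | PathWit N k m w w' ab ∧
    ∀ i j, i < j → j < m → label w ab.1 ab.2 j < label w ab.1 ab.2 i}


/-- The cycle `(x₁ x₂ … x_r)` (sending `x₁ ↦ x₂ ↦ ⋯ ↦ x_r ↦ x₁`), as a product
of transpositions. -/
def cycleList (N : ℕ) [NeZero N] (l : List ℕ) : Equiv.Perm (Fin N) :=
  ((l.zip l.tail).map fun p => t N p.1 p.2).prod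

/-- The Grassmannian permutation `h[k;p,q]` of descent `k` and hook shape `(p,1^{q-1})`:
the `(p+q)`-cycle `(k-q+1  k-q+2 … k  k+p  k+p-1 … k+1)`. -/
def hookPerm (N k p q : ℕ) [NeZero N] : Equiv.Perm (Fin N) :=
  cycleList N (((List.range q).map fun i => k - q + 1 + i) ++
    ((List.range p).reverse.map fun i => k + 1 + i))

/-- `w|ₚ ∈ S_{N-1}`: delete row `p` and column `w(p)` from the permutation matrix of `w`. -/
def drop {N : ℕ} (w : Equiv.Perm (Fin (N + 1))) (p : Fin (N + 1)) : Equiv.Perm (Fin N) :=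
  Equiv.removeNone (((finSuccEquiv' p).symm.trans (w : Fin (N + 1) ≃ Fin (N + 1))).trans
    (finSuccEquiv' (w p)))

/-- `lam` is a partition with at most `k` parts (1-indexed parts `lam 1 ≥ lam 2 ≥ ⋯`,
normalized by `lam 0 = 0`). -/
def IsPartFun (k : ℕ) (lam : ℕ → ℕ) : Prop :=
  lam 0 = 0 ∧ (∀ j, 1 ≤ j → lam (j + 1) ≤ lam j) ∧ ∀ j, k < j → lam j = 0

/-- `h_d(x₁,…,x_k)` for an integer `d`, with `h_d = 0` for `d < 0`. -/
noncomputable def hPolyZ (N k : ℕ) (d : ℤ) : MvPolynomial (Fin N) ℤ :=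
  if 0 ≤ d then hPoly N k d.toNat else 0

/-- The Schur polynomial `s_λ(x₁,…,x_k)`, via the Jacobi–Trudi determinant
`det(h_{λᵢ+j-i})_{1 ≤ i,j ≤ k}`. -/
noncomputable def schurPoly (N k : ℕ) (lam : ℕ → ℕ) : MvPolynomial (Fin N) ℤ :=
  (Matrix.of fun i j : Fin k =>
    hPolyZ N k ((lam ((i : ℕ) + 1) : ℤ) + (j : ℕ) - (i : ℕ))).det

/-- `r_j = #{i : aᵢ = j}` (with `i` ranging over `0,…,m-1`, 0-indexed). -/
def rJ (a : ℕ → ℕ) (m j : ℕ) : ℕ := ((Finset.range m).filter fun i => a i = j).card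

/-- `μ_j = r_{j+1} + ⋯ + r_k`. -/
def muJ (a : ℕ → ℕ) (m k j : ℕ) : ℕ :=
  if j = 0 then 0 else ∑ j' ∈ Finset.Icc (j + 1) k, rJ a m j'

/-- `λ_j = μ_j + r_j`. -/
def lamJ (a : ℕ → ℕ) (m k j : ℕ) : ℕ :=
  if j = 0 then 0 else muJ a m k j + rJ a m j

/-- `d_j = #{i : bᵢ = N+1-j}` (with `i` ranging over `0,…,m-1`, 0-indexed). -/
def dJ (b : ℕ → ℕ) (m N j : ℕ) : ℕ :=
  ((Finset.range m).filter fun i => b i = N + 1 - j).card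

/-- `μ′_j = d_{j+1} + ⋯ + d_{N-k}`. -/
def muJ' (b : ℕ → ℕ) (m N k j : ℕ) : ℕ :=
  if j = 0 then 0 else ∑ j' ∈ Finset.Icc (j + 1) (N - k), dJ b m N j'

/-- `λ′_j = μ′_j + d_j`. -/
def lamJ' (b : ℕ → ℕ) (m N k j : ℕ) : ℕ :=
  if j = 0 then 0 else muJ' b m N k j + dJ b m N j

/-- The conjugate (transpose) partition: `νᵗ_j = #{i : νᵢ ≥ j}`, for `ν` with at
most `k` parts. -/
def conjPart (k : ℕ) (nu : ℕ → ℕ) (j : ℕ) : ℕ :=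
  if j = 0 then 0 else ((Finset.Icc 1 k).filter fun i => j ≤ nu i).card

/-- `wv` is the Grassmannian permutation of descent `k` and shape `nu`:
`wv(j) = j + ν_{k+1-j}` for `1 ≤ j ≤ k`, and `wv` is increasing on `{k+1,…,N}`. -/
def IsGrassOf (N k : ℕ) [NeZero N] (nu : ℕ → ℕ) (wv : Equiv.Perm (Fin N)) : Prop :=
  (∀ j, 1 ≤ j → j ≤ k → val wv j = j + nu (k + 1 - j)) ∧
  (∀ j, k < j → j < N → val wv j < val wv (j + 1))

/-- Paths of length `m` in the `k`-Bruhat order from `w` to `w'` whose labels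
increase strictly for the first `p` steps and decrease strictly thereafter
(positions `p, p+1, …, m` being decreasing, 1-indexed). -/
def IncDecPaths (N k m p : ℕ) [NeZero N] (w w' : Equiv.Perm (Fin N)) :
    Set ((ℕ → ℕ) × (ℕ → ℕ)) :=
  {ab | PathWit N k m w w' ab ∧
    (∀ i j, i < j → j < p → label w ab.1 ab.2 i < label w ab.1 ab.2 j) ∧
    (∀ i j, p - 1 ≤ i → i < j → j < m → label w ab.1 ab.2 j < label w ab.1 ab.2 i)}

/-- Paths of length `m` in the `k`-Bruhat order from `w` to `w'` whose labels
decrease strictly for the first `q` steps and increase strictly thereafter. -/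
def DecIncPaths (N k m q : ℕ) [NeZero N] (w w' : Equiv.Perm (Fin N)) :
    Set ((ℕ → ℕ) × (ℕ → ℕ)) :=
  {ab | PathWit N k m w w' ab ∧
    (∀ i j, i < j → j < q → label w ab.1 ab.2 j < label w ab.1 ab.2 i) ∧
    (∀ i j, q - 1 ≤ i → i < j → j < m → label w ab.1 ab.2 i < label w ab.1 ab.2 j)}

/-- cover criterion in terms of one-line form -/
def cov {N : ℕ} (w : Equiv.Perm (Fin N)) (a b : Fin N) : Prop :=
  a < b ∧ w a < w b ∧ ∀ c, a < c → c < b → ¬ (w a < w c ∧ w c < w b)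

lemma cov_comm_aux {N : ℕ} (w : Equiv.Perm (Fin N)) (a b c e : Fin N)
    (hac : a ≠ c) (hae : a ≠ e) (hbc : b ≠ c) (hbe : b ≠ e)
    (h1 : cov w c e) (h2 : cov (w * swap c e) a b) :
    cov w a b ∧ cov (w * swap a b) c e := by
  obtain ⟨hce, hwce, h1⟩ := h1
  obtain ⟨hab, hwab, h2⟩ := h2
  have ec : (w * swap c e) c = w e := by simp
  have ee : (w * swap c e) e = w c := by simp
  have eo : ∀ x, x ≠ c → x ≠ e → (w * swap c e) x = w x := by
    intro x h h'; simp [swap_apply_of_ne_of_ne h h']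
  have fa : (w * swap a b) a = w b := by simp
  have fb : (w * swap a b) b = w a := by simp
  have fo : ∀ x, x ≠ a → x ≠ b → (w * swap a b) x = w x := by
    intro x h h'; simp [swap_apply_of_ne_of_ne h h']
  rw [eo a hac hae, eo b hbc hbe] at hwab
  rw [eo a hac hae, eo b hbc hbe] at h2
  have inj : ∀ x y, x ≠ y → w x ≠ w y := fun x y h => w.injective.ne h
  have h1a := h1 a
  have h1b := h1 b
  have h2c := h2 c
  have h2e := h2 e
  rw [ec] at h2c
  rw [ee] at h2e
  have i1 := inj a c hac
  have i2 := inj a e hae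
  have i3 := inj b c hbc
  have i4 := inj b e hbe
  have key : cov w a b := by
    refine ⟨hab, hwab, ?_⟩
    intro x hx hx'
    by_cases hxc : x = c
    · subst hxc; omega
    by_cases hxe : x = e
    · subst hxe; omega
    have := h2 x hx hx'
    rwa [eo x hxc hxe] at this
  refine ⟨key, hce, ?_, ?_⟩
  · rw [fo c hac.symm hbc.symm, fo e hae.symm hbe.symm]; exact hwce
  · rw [fo c hac.symm hbc.symm, fo e hae.symm hbe.symm]
    intro x hx hx'
    by_cases hxa : x = a
    · subst hxa; rw [fa]; omega
    by_cases hxb : x = b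
    · subst hxb; rw [fb]; omega
    rw [fo x hxa hxb]; exact h1 x hx hx'

lemma cov_comm {N : ℕ} (w : Equiv.Perm (Fin N)) (a b c e : Fin N)
    (hac : a ≠ c) (hae : a ≠ e) (hbc : b ≠ c) (hbe : b ≠ e) :
    (cov w c e ∧ cov (w * swap c e) a b) ↔ (cov w a b ∧ cov (w * swap a b) c e) :=
  ⟨fun h => cov_comm_aux w a b c e hac hae hbc hbe h.1 h.2,
   fun h => cov_comm_aux w c e a b hac.symm hbc.symm hae.symm hbe.symm h.1 h.2⟩

lemma cov_three_left {N : ℕ} (w : Equiv.Perm (Fin N)) (a k b : Fin N) (hak : a < k) (hkb : k < b) :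
    (cov w k b ∧ cov (w * swap k b) a k) ↔ (w k < w b ∧ w a < w b ∧
      (∀ c, k < c → c < b → ¬ (w k < w c ∧ w c < w b)) ∧
      (∀ c, a < c → c < k → ¬ (w a < w c ∧ w c < w b))) := by
  have e1 : (w * swap k b) a = w a := by
    simp [swap_apply_of_ne_of_ne hak.ne (hak.trans hkb).ne]
  have e2 : (w * swap k b) k = w b := by simp
  have eo : ∀ x, x < k → (w * swap k b) x = w x := by
    intro x h; simp [swap_apply_of_ne_of_ne h.ne (h.trans hkb).ne]
  unfold cov
  rw [e1, e2]
  constructor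
  · rintro ⟨⟨_, h1, h2⟩, _, h3, h4⟩
    refine ⟨h1, h3, h2, ?_⟩
    intro c hc hc'
    have := h4 c hc hc'
    rwa [eo c hc'] at this
  · rintro ⟨h1, h3, h2, h4⟩
    refine ⟨⟨hkb, h1, h2⟩, hak, h3, ?_⟩
    intro c hc hc'
    rw [eo c hc']; exact h4 c hc hc'

lemma cov_three_mid {N : ℕ} (w : Equiv.Perm (Fin N)) (a k b : Fin N) (hak : a < k) (hkb : k < b) :
    (cov w a b ∧ cov (w * swap a b) k b) ↔ (w k < w a ∧ (w k < w b ∧ w a < w b ∧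
      (∀ c, k < c → c < b → ¬ (w k < w c ∧ w c < w b)) ∧
      (∀ c, a < c → c < k → ¬ (w a < w c ∧ w c < w b)))) := by
  have e1 : (w * swap a b) k = w k := by
    simp [swap_apply_of_ne_of_ne hak.ne' hkb.ne]
  have e2 : (w * swap a b) b = w a := by simp
  have eo : ∀ x, k < x → x < b → (w * swap a b) x = w x := by
    intro x h h'; simp [swap_apply_of_ne_of_ne (hak.trans h).ne' h'.ne]
  unfold cov
  rw [e1, e2]
  constructor
  · rintro ⟨⟨_, h1, h2⟩, _, h3, h4⟩
    refine ⟨h3, h3.trans h1, h1, ?_, ?_⟩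
    · intro c hc hc'
      have := h4 c hc hc'
      rw [eo c hc hc'] at this
      have h5 := h2 c (hak.trans hc) hc'
      have : w c ≠ w a := w.injective.ne (hak.trans hc).ne'
      omega
    · intro c hc hc'
      exact h2 c hc (hc'.trans hkb)
  · rintro ⟨h1, h3, h4, h5, h6⟩
    refine ⟨⟨hak.trans hkb, h4, ?_⟩, hkb, h1, ?_⟩
    · intro c hc hc'
      rcases lt_trichotomy c k with h | h | h
      · exact h6 c hc h
      · subst h; omega
      · have := h5 c h hc'; omega
    · intro c hc hc'
      rw [eo c hc hc']; have := h5 c hc hc'; omega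

lemma cov_three_right {N : ℕ} (w : Equiv.Perm (Fin N)) (a k b : Fin N) (hak : a < k) (hkb : k < b) :
    (cov w a k ∧ cov (w * swap a k) a b) ↔ (w a < w k ∧ (w k < w b ∧ w a < w b ∧
      (∀ c, k < c → c < b → ¬ (w k < w c ∧ w c < w b)) ∧
      (∀ c, a < c → c < k → ¬ (w a < w c ∧ w c < w b)))) := by
  have e1 : (w * swap a k) a = w k := by simp
  have e3 : (w * swap a k) k = w a := by simp
  have e2 : (w * swap a k) b = w b := by
    simp [swap_apply_of_ne_of_ne (hak.trans hkb).ne' hkb.ne']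
  have eo : ∀ x, a < x → x ≠ k → (w * swap a k) x = w x := by
    intro x h h'; simp [swap_apply_of_ne_of_ne h.ne' h']
  unfold cov
  rw [e1, e2]
  constructor
  · rintro ⟨⟨_, h1, h2⟩, _, h3, h4⟩
    refine ⟨h1, h3, h1.trans h3, ?_, ?_⟩
    · intro c hc hc'
      have := h4 c (hak.trans hc) hc'
      rwa [eo c (hak.trans hc) hc.ne'] at this
    · intro c hc hc'
      have := h4 c hc (hc'.trans hkb)
      rw [eo c hc hc'.ne] at this
      have h5 := h2 c hc hc'
      have : w c ≠ w k := w.injective.ne hc'.ne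
      omega
  · rintro ⟨h1, h3, h4, h5, h6⟩
    refine ⟨⟨hak, h1, ?_⟩, hak.trans hkb, h3, ?_⟩
    · intro c hc hc'
      have := h6 c hc hc'; omega
    · intro c hc hc'
      by_cases h : c = k
      · subst h; rw [e3]; omega
      · rw [eo c hc h]
        rcases lt_or_gt_of_ne h with h | h
        · have := h6 c hc h; omega
        · exact h5 c h hc'

/-- free module on permutations -/
abbrev VV (N : ℕ) := Equiv.Perm (Fin N) →₀ ℤ

/-- basis vector -/
noncomputable abbrev bv {N : ℕ} (w : Equiv.Perm (Fin N)) : VV N := Finsupp.single w 1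

/-- extend linearly from basis -/
noncomputable def ext {N : ℕ} (f : Equiv.Perm (Fin N) → VV N) : Module.End ℤ (VV N) :=
  Finsupp.linearCombination ℤ f

@[simp] lemma ext_bv {N : ℕ} (f : Equiv.Perm (Fin N) → VV N) (w) : ext f (bv w) = f w := by
  simp [ext]

lemma end_ext {N : ℕ} {M : Type*} [AddCommGroup M] {f g : VV N →ₗ[ℤ] M}
    (h : ∀ w, f (bv w) = g (bv w)) : f = g := by
  apply Finsupp.lhom_ext'
  intro w
  apply LinearMap.ext_ring
  simpa using h w

/-- the cover operator `[ab]` -/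
noncomputable def op {N : ℕ} (a b : Fin N) : Module.End ℤ (VV N) :=
  ext fun w => if cov w a b then bv (w * swap a b) else 0

lemma op_bv {N : ℕ} (a b : Fin N) (w) :
    op a b (bv w) = if cov w a b then bv (w * swap a b) else 0 := by
  simp [op]

lemma op_op_bv {N : ℕ} (a b c e : Fin N) (w) :
    op a b (op c e (bv w)) = if cov w c e ∧ cov (w * swap c e) a b then
      bv (w * swap c e * swap a b) else 0 := by
  rw [op_bv]
  by_cases h : cov w c e
  · simp [h, op_bv]
  · simp [h]

lemma op_comm {N : ℕ} (a b c e : Fin N)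
    (hac : a ≠ c) (hae : a ≠ e) (hbc : b ≠ c) (hbe : b ≠ e) (w) :
    op a b (op c e (bv w)) = op c e (op a b (bv w)) := by
  rw [op_op_bv, op_op_bv]
  have : w * swap c e * swap a b = w * swap a b * swap c e := by
    rw [mul_assoc, mul_assoc]
    congr 1
    ext x
    simp only [Perm.coe_mul, Function.comp_apply, swap_apply_def]
    split_ifs <;> simp_all
  rw [this]
  simp only [cov_comm w a b c e hac hae hbc hbe]

lemma op_three {N : ℕ} (a k b : Fin N) (hak : a < k) (hkb : k < b) (w) :
    op a k (op k b (bv w)) = op k b (op a b (bv w)) + op a b (op a k (bv w)) := by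
  rw [op_op_bv, op_op_bv, op_op_bv]
  simp only [cov_three_left w a k b hak hkb, cov_three_right w a k b hak hkb,
    cov_three_mid w a k b hak hkb]
  have e1 : w * swap k b * swap a k = w * swap a b * swap k b := by
    rw [mul_assoc, mul_assoc]; congr 1; ext x
    simp only [Perm.coe_mul, Function.comp_apply, swap_apply_def]
    have := hak.trans hkb
    split_ifs <;> omega
  have e2 : w * swap k b * swap a k = w * swap a k * swap a b := by
    rw [mul_assoc, mul_assoc]; congr 1; ext x
    simp only [Perm.coe_mul, Function.comp_apply, swap_apply_def]
    have := hak.trans hkb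
    split_ifs <;> omega
  rw [← e1, ← e2]
  rcases lt_or_gt_of_ne (w.injective.ne hak.ne) with h | h
  · simp [h, h.not_gt]
  · simp [h, h.not_gt]

lemma swap_adj_lt {N : ℕ} (i j : Fin N) (hij : (j : ℕ) = i + 1) (x y : Fin N)
    (h1 : ¬ (x = i ∧ y = j)) (h2 : ¬ (x = j ∧ y = i)) :
    (swap i j x < swap i j y ↔ x < y) := by
  simp only [swap_apply_def]
  split_ifs <;> (try subst_vars) <;> simp_all <;> omega

lemma cov_d_aux {N : ℕ} (w : Equiv.Perm (Fin N)) (i j a b : Fin N) (hij : (j : ℕ) = i + 1)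
    (hab : ¬ (a = i ∧ b = j)) (hba : a < b) :
    (cov w a b ∧ (w * swap a b) j < (w * swap a b) i) ↔
    (w j < w i ∧ cov (w * swap i j) (swap i j a) (swap i j b)) := by
  have hab2 : ¬ (a = j ∧ b = i) := by rintro ⟨rfl, rfl⟩; omega
  have hlt : i < j := by omega
  have e : cov (w * swap i j) (swap i j a) (swap i j b) ↔ (w a < w b ∧
      ∀ c, swap i j a < swap i j c → swap i j c < swap i j b → ¬ (w a < w c ∧ w c < w b)) := by
    unfold cov
    simp only [Perm.coe_mul, Function.comp_apply, swap_apply_self]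
    rw [swap_adj_lt i j hij a b hab hab2]
    constructor
    · rintro ⟨_, h1, h2⟩
      refine ⟨h1, fun c hc hc' => ?_⟩
      have := h2 _ hc hc'
      simpa using this
    · rintro ⟨h1, h2⟩
      refine ⟨hba, h1, fun c hc hc' => ?_⟩
      have := h2 (swap i j c)
      simp only [swap_apply_self] at this
      exact this hc hc'
  rw [e]
  unfold cov
  have ei : (w * swap a b) i = if i = a then w b else if i = b then w a else w i := by
    simp only [Perm.coe_mul, Function.comp_apply, swap_apply_def]; split_ifs <;> rfl
  have ej : (w * swap a b) j = if j = a then w b else if j = b then w a else w j := by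
    simp only [Perm.coe_mul, Function.comp_apply, swap_apply_def]; split_ifs <;> rfl
  rw [ei, ej]
  have si : swap i j i = j := by simp
  have sj : swap i j j = i := by simp
  have so : ∀ c, c ≠ i → c ≠ j → swap i j c = c := fun c h h' => swap_apply_of_ne_of_ne h h'
  by_cases hai : a = i
  · subst hai
    have hbj : b ≠ j := fun h => hab ⟨rfl, h⟩
    have hjb : j < b := by omega
    have sb := so b hba.ne' hbj
    rw [si, sb]
    simp only [if_true, hlt.ne', if_false, hjb.ne]
    have inj := w.injective.ne hlt.ne
    constructor
    · rintro ⟨⟨_, h1, h2⟩, h3⟩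
      have := h2 j hlt hjb
      refine ⟨by omega, h1, fun c hc hc' => ?_⟩
      by_cases hcj : c = j
      · subst hcj; rw [sj] at hc; omega
      by_cases hci : c = a
      · subst hci; omega
      rw [so c hci hcj] at hc hc'
      exact h2 c (by omega) hc'
    · rintro ⟨h3, h1, h2⟩
      refine ⟨⟨hba, h1, fun c hc hc' => ?_⟩, by omega⟩
      by_cases hcj : c = j
      · subst hcj; omega
      have := h2 c
      rw [so c hc.ne' hcj] at this
      exact this (by omega) hc'
  by_cases haj : a = j
  · subst haj
    rw [sj, so b (by omega) hba.ne']
    have hib : i ≠ b := by omega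
    simp only [if_true, hlt.ne, if_false, hib]
    constructor
    · rintro ⟨⟨_, h1, h2⟩, h3⟩
      refine ⟨by omega, h1, fun c hc hc' => ?_⟩
      by_cases hcj : c = a
      · subst hcj; omega
      by_cases hci : c = i
      · subst hci; omega
      rw [so c hci hcj] at hc hc'
      exact h2 c (by omega) hc'
    · rintro ⟨h3, h1, h2⟩
      have := h2 i
      rw [si] at this
      have := this hlt hba
      have inj := w.injective.ne hib
      refine ⟨⟨hba, h1, fun c hc hc' => ?_⟩, by omega⟩
      have := h2 c
      rw [so c (by omega) hc.ne'] at this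
      exact this (by omega) hc'
  rw [so a hai haj]
  have hia : i ≠ a := fun h => hai h.symm
  have hja : j ≠ a := fun h => haj h.symm
  simp only [hia, hja, if_false]
  by_cases hbi : b = i
  · subst hbi
    rw [si]
    simp only [if_true, hlt.ne', if_false]
    constructor
    · rintro ⟨⟨_, h1, h2⟩, h3⟩
      refine ⟨by omega, h1, fun c hc hc' => ?_⟩
      by_cases hcj : c = j
      · subst hcj; omega
      by_cases hci : c = b
      · subst hci; omega
      rw [so c hci hcj] at hc hc'
      exact h2 c hc (by omega)
    · rintro ⟨h3, h1, h2⟩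
      have := h2 j
      rw [sj] at this
      have := this hba hlt
      have inj := w.injective.ne hja
      refine ⟨⟨hba, h1, fun c hc hc' => ?_⟩, by omega⟩
      have := h2 c
      rw [so c hc'.ne (by omega)] at this
      exact this hc (by omega)
  by_cases hbj : b = j
  · subst hbj
    rw [sj]
    have hai' : a < i := by omega
    simp only [if_true, hlt.ne, if_false]
    constructor
    · rintro ⟨⟨_, h1, h2⟩, h3⟩
      have := h2 i hai' hlt
      have inj := w.injective.ne hlt.ne
      refine ⟨by omega, h1, fun c hc hc' => ?_⟩
      by_cases hcj : c = b
      · subst hcj; omega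
      by_cases hci : c = i
      · subst hci; omega
      rw [so c hci hcj] at hc hc'
      exact h2 c hc (by omega)
    · rintro ⟨h3, h1, h2⟩
      refine ⟨⟨hba, h1, fun c hc hc' => ?_⟩, by omega⟩
      by_cases hci : c = i
      · subst hci; omega
      have := h2 c
      rw [so c hci (by omega)] at this
      exact this hc (by omega)
  have hib : i ≠ b := fun h => hbi h.symm
  have hjb : j ≠ b := fun h => hbj h.symm
  rw [so b hbi hbj]
  simp only [hib, hjb, if_false]
  have key : ∀ c, (a < swap i j c ↔ a < c) ∧ (swap i j c < b ↔ c < b) := by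
    intro c
    by_cases hci : c = i
    · subst hci; rw [si]; omega
    by_cases hcj : c = j
    · subst hcj; rw [sj]; omega
    rw [so c hci hcj]; simp
  simp only [key]
  tauto

/-- combinatorial divided difference -/
noncomputable def dd {N : ℕ} (i j : Fin N) : Module.End ℤ (VV N) :=
  ext fun w => if w j < w i then bv (w * swap i j) else 0

lemma dd_bv {N : ℕ} (i j : Fin N) (w) :
    dd i j (bv w) = if w j < w i then bv (w * swap i j) else 0 := by
  simp [dd]

lemma dd_op {N : ℕ} (i j a b : Fin N) (hij : (j : ℕ) = i + 1)
    (hab : ¬ (a = i ∧ b = j)) (hab' : ¬ (a = j ∧ b = i)) (w) :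
    dd i j (op a b (bv w)) = op (swap i j a) (swap i j b) (dd i j (bv w)) := by
  by_cases hba : a < b
  · have h := cov_d_aux w i j a b hij hab hba
    have e1 : dd i j (op a b (bv w)) = if (cov w a b ∧ (w * swap a b) j < (w * swap a b) i) then
        bv (w * swap a b * swap i j) else 0 := by
      rw [op_bv]
      by_cases h : cov w a b
      · simp only [h, if_true, dd_bv, true_and]
      · simp [h]
    have e2 : op (swap i j a) (swap i j b) (dd i j (bv w)) =
        if (w j < w i ∧ cov (w * swap i j) (swap i j a) (swap i j b)) then
        bv (w * swap a b * swap i j) else 0 := by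
      rw [dd_bv]
      by_cases h : w j < w i
      · simp only [h, if_true, op_bv, true_and]
        have : w * swap i j * swap ((swap i j) a) ((swap i j) b) = w * swap a b * swap i j := by
          rw [mul_assoc, mul_assoc]; congr 1
          rw [Equiv.mul_swap_eq_swap_mul]; simp
        rw [this]
      · simp [h]
    rw [e1, e2]
    simp only [h]
  · have h1 : ∀ w, ¬ cov w a b := fun w h => hba h.1
    have h2 : ∀ w, ¬ cov w (swap i j a) (swap i j b) := fun w h =>
      hba ((swap_adj_lt i j hij a b hab hab').1 h.1)
    rw [op_bv, dd_bv]
    simp only [h1, if_false, map_zero]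
    split_ifs
    · rw [op_bv]; simp [h2]
    · simp

lemma cov_adj {N : ℕ} (i j : Fin N) (hij : (j : ℕ) = i + 1) (w : Equiv.Perm (Fin N)) :
    cov w i j ↔ w i < w j := by
  unfold cov
  constructor
  · exact fun h => h.2.1
  · intro h
    exact ⟨by omega, h, fun c _ _ => by omega⟩

lemma not_cov {N : ℕ} (i j : Fin N) (hij : j ≤ i) (w : Equiv.Perm (Fin N)) :
    ¬ cov w i j := fun h => by have := h.1; omega

lemma op_zero {N : ℕ} (i j : Fin N) (hij : j ≤ i) : op i j = 0 := by
  apply end_ext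
  intro w
  rw [op_bv]; simp [not_cov i j hij]

lemma dd_op_adj {N : ℕ} (i j : Fin N) (hij : (j : ℕ) = i + 1) (w) :
    dd i j (op i j (bv w)) = bv w - op i j (dd i j (bv w)) := by
  have hne : i ≠ j := by omega
  rw [op_bv, dd_bv]
  simp only [cov_adj i j hij]
  rcases lt_or_gt_of_ne (w.injective.ne hne) with h | h
  · simp [h, h.not_gt, dd_bv]
  · simp [h, h.not_gt, op_bv, cov_adj i j hij]

/-- Monk operator for multiplication by `x_j` -/
noncomputable def XX {N : ℕ} (j : Fin N) : Module.End ℤ (VV N) :=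
  ∑ b, (op j b - op b j)

lemma dd_XX_other {N : ℕ} (i j l : Fin N) (hij : (j : ℕ) = i + 1) (hi : l ≠ i) (hj : l ≠ j) (w) :
    dd i j (XX l (bv w)) = XX l (dd i j (bv w)) := by
  simp only [XX, LinearMap.sum_apply, LinearMap.sub_apply, map_sum, map_sub]
  rw [← Equiv.sum_comp (swap i j) (fun b => (op l b) ((dd i j) (bv w)) - (op b l) ((dd i j) (bv w)))]
  apply Finset.sum_congr rfl
  intro b _
  rw [dd_op i j l b hij (by tauto) (by tauto), dd_op i j b l hij (by tauto) (by tauto),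
    swap_apply_of_ne_of_ne hi hj]

lemma dd_XX_i {N : ℕ} (i j : Fin N) (hij : (j : ℕ) = i + 1) (w) :
    dd i j (XX i (bv w)) = bv w + XX j (dd i j (bv w)) := by
  simp only [XX, LinearMap.sum_apply, LinearMap.sub_apply, map_sum, map_sub]
  rw [← Equiv.sum_comp (swap i j) (fun b => (op j b) ((dd i j) (bv w)) - (op b j) ((dd i j) (bv w)))]
  rw [← sub_eq_iff_eq_add, ← Finset.sum_sub_distrib]
  rw [Finset.sum_eq_single j]
  · rw [dd_op_adj i j hij]
    simp [op_zero j i (by omega)]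
  · intro b _ hb
    by_cases hbi : b = i
    · subst hbi; simp [op_zero]
    rw [dd_op i j i b hij (by tauto) (by tauto), dd_op i j b i hij (by tauto) (by tauto)]
    simp
  · simp

lemma dd_XX_j {N : ℕ} (i j : Fin N) (hij : (j : ℕ) = i + 1) (w) :
    dd i j (XX j (bv w)) = XX i (dd i j (bv w)) - bv w := by
  simp only [XX, LinearMap.sum_apply, LinearMap.sub_apply, map_sum, map_sub]
  rw [← Equiv.sum_comp (swap i j) (fun b => (op i b) ((dd i j) (bv w)) - (op b i) ((dd i j) (bv w)))]
  rw [sub_eq_neg_add (∑ i_1, _) (bv w), ← sub_eq_iff_eq_add, ← Finset.sum_sub_distrib]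
  rw [Finset.sum_eq_single i]
  · rw [dd_op_adj i j hij]
    simp [op_zero j i (by omega)]
  · intro b _ hb
    by_cases hbi : b = j
    · subst hbi; simp [op_zero]
    rw [dd_op i j j b hij (by tauto) (by tauto), dd_op i j b j hij (by tauto) (by tauto)]
    simp
  · simp

/-- sum of covers in the k-Bruhat order with label `l` -/
noncomputable def AA {N : ℕ} (k : ℕ) (l : Fin N) : Module.End ℤ (VV N) :=
  ext fun w => if k ≤ (w.symm l : ℕ) then
    ∑ a : Fin N, if (a : ℕ) < k then op a (w.symm l) (bv w) else 0 else 0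

lemma AA_bv {N : ℕ} (k : ℕ) (l : Fin N) (w) :
    AA k l (bv w) = if k ≤ (w.symm l : ℕ) then
      ∑ a : Fin N, if (a : ℕ) < k then op a (w.symm l) (bv w) else 0 else 0 := by
  simp [AA]

lemma symm_mul_swap {N : ℕ} (w : Equiv.Perm (Fin N)) (x y l : Fin N) :
    (w * swap x y).symm l = swap x y (w.symm l) := by
  rw [Equiv.symm_apply_eq]; simp

lemma AA_op {N : ℕ} (k : ℕ) (l : Fin N) (x y : Fin N) (w) :
    AA k l (op x y (bv w)) = if k ≤ (swap x y (w.symm l) : ℕ) then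
      ∑ a : Fin N, if (a : ℕ) < k then op a (swap x y (w.symm l)) (op x y (bv w)) else 0 else 0 := by
  rw [op_bv]
  by_cases h : cov w x y
  · simp only [h, if_true]
    rw [AA_bv, symm_mul_swap]
  · simp [h]

/-- partial Monk operator: labels smaller than `j` -/
noncomputable def YY {N : ℕ} (k : ℕ) (j : ℕ) : Module.End ℤ (VV N) :=
  ∑ l : Fin N, if (l : ℕ) < j then AA (k + 1) l - AA k l else 0

lemma AA_diff {N : ℕ} (κ : Fin N) (l : Fin N) (w) :
    AA (κ + 1) l (bv w) - AA κ l (bv w) = op κ (w.symm l) (bv w) -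
      if w.symm l = κ then ∑ a, op a κ (bv w) else 0 := by
  rw [AA_bv, AA_bv]
  generalize w.symm l = c
  rcases lt_trichotomy κ c with h | h | h
  · have h1 : (κ : ℕ) + 1 ≤ c := by omega
    have h2 : (κ : ℕ) ≤ c := by omega
    simp only [h1, h2, h.ne', if_true, if_false, sub_zero]
    rw [← Finset.sum_sub_distrib, Finset.sum_eq_single κ]
    · simp
    · intro b _ hb
      have : ((b : ℕ) < κ + 1) ↔ (b : ℕ) < κ := by
        have : (b : ℕ) ≠ κ := fun h => hb (Fin.ext h)
        omega
      simp [this]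
    · simp
  · subst h
    simp only [le_refl, if_true, op_zero κ κ le_rfl]
    simp only [LinearMap.zero_apply]
    rw [if_neg (by omega)]
    congr 1
    apply Finset.sum_congr rfl
    intro a _
    split_ifs with h
    · rfl
    · rw [op_zero a κ (by omega)]; rfl
  · rw [if_neg (by omega), if_neg (by omega), if_neg h.ne, op_zero κ c h.le]
    simp

lemma YY_bv {N : ℕ} (κ : Fin N) (j : ℕ) (w) :
    YY κ j (bv w) = (∑ c, if (w c : ℕ) < j then op κ c (bv w) else 0) -
      if (w κ : ℕ) < j then ∑ a, op a κ (bv w) else 0 := by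
  have : YY (κ : ℕ) j (bv w) = ∑ c : Fin N, if (w c : ℕ) < j then
      op κ c (bv w) - (if c = κ then ∑ a, op a κ (bv w) else 0) else 0 := by
    rw [YY, LinearMap.sum_apply, ← Equiv.sum_comp w]
    apply Finset.sum_congr rfl
    intro c _
    split_ifs with h1 h2
    · rw [LinearMap.sub_apply, AA_diff]
      simp [h2]
    · rw [LinearMap.sub_apply, AA_diff]
      simp [h2]
    · simp
  rw [this, sub_eq_add_neg]
  have e : (if (w κ : ℕ) < j then ∑ a, op a κ (bv w) else 0) =
      ∑ c : Fin N, if (w c : ℕ) < j then (if c = κ then ∑ a, op a κ (bv w) else 0) else 0 := by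
    generalize ∑ a, op a κ (bv w) = S
    rw [Finset.sum_eq_single κ]
    · rw [if_pos rfl]
    · intro b _ hb; rw [if_neg hb, ite_self]
    · simp
  rw [e, ← sub_eq_add_neg, ← Finset.sum_sub_distrib]
  apply Finset.sum_congr rfl
  intro c _
  by_cases h : (w c : ℕ) < j <;> simp only [h, if_true, if_false, sub_zero]

lemma YY_op {N : ℕ} (κ : Fin N) (j : ℕ) (x y : Fin N) (w) :
    YY κ j (op x y (bv w)) =
      (∑ c, if (w (swap x y c) : ℕ) < j then op κ c (op x y (bv w)) else 0) -
      if (w (swap x y κ) : ℕ) < j then ∑ a, op a κ (op x y (bv w)) else 0 := by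
  rw [op_bv]
  by_cases h : cov w x y
  · simp only [h, if_true]
    rw [YY_bv]
    rfl
  · simp [h]

lemma YY_full {N : ℕ} (κ : Fin N) : YY (N := N) κ N = XX κ := by
  apply end_ext
  intro w
  rw [YY_bv, XX]
  simp [LinearMap.sum_apply]

lemma AA_sq {N : ℕ} (k : ℕ) (l : Fin N) : AA k l * AA k l = 0 := by
  apply end_ext
  intro w
  rw [Module.End.mul_apply, AA_bv]
  split_ifs with h
  · rw [map_sum]
    apply Finset.sum_eq_zero
    intro a _
    split_ifs with ha
    · rw [AA_op]
      simp [ha]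
    · simp
  · simp

/-- the key quadratic relation, termwise -/
lemma quad_term {N : ℕ} (κ a b : Fin N) (hak : a < κ) (hkb : κ < b) (w : Equiv.Perm (Fin N)) :
    ((∑ c, if (w (swap a b c) : ℕ) < (w b : ℕ) then op κ c (op a b (bv w)) else 0) -
      if (w κ : ℕ) < (w b : ℕ) then ∑ c, op c κ (op a b (bv w)) else 0) =
    ((∑ c, if (w c : ℕ) < (w b : ℕ) then op a b (op κ c (bv w)) else 0) -
      if (w κ : ℕ) < (w b : ℕ) then ∑ c, op a b (op c κ (bv w)) else 0) +
    op a κ (op κ b (bv w)) := by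
  have hab := hak.trans hkb
  have h1 : (∑ c, if (w (swap a b c) : ℕ) < (w b : ℕ) then op κ c (op a b (bv w)) else 0) -
      (∑ c, if (w c : ℕ) < (w b : ℕ) then op a b (op κ c (bv w)) else 0) =
      op κ b (op a b (bv w)) := by
    rw [← Finset.sum_sub_distrib, Finset.sum_eq_single b]
    · simp only [swap_apply_right, lt_irrefl, if_false, sub_zero]
      split_ifs with h
      · rfl
      · rw [op_bv, if_neg]
        · simp
        · intro h'; exact h h'.2.1
    · intro c _ hc
      by_cases hca : c = a
      · subst hca; simp [op_zero κ c hak.le]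
      by_cases hck : c = κ
      · subst hck; simp [op_zero c c le_rfl]
      rw [swap_apply_of_ne_of_ne hca hc, op_comm κ c a b hak.ne' hkb.ne hca hc, sub_self]
    · simp
  have h2 : (if (w κ : ℕ) < (w b : ℕ) then ∑ c, op c κ (op a b (bv w)) else 0) -
      (if (w κ : ℕ) < (w b : ℕ) then ∑ c, op a b (op c κ (bv w)) else 0) =
      - op a b (op a κ (bv w)) := by
    split_ifs with hk
    · rw [← Finset.sum_sub_distrib, Finset.sum_eq_single a]
      · have : op a κ (op a b (bv w)) = 0 := by
          rw [op_op_bv, if_neg]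
          rintro ⟨_, _, h, _⟩
          simp only [Perm.coe_mul, Function.comp_apply, swap_apply_left,
            swap_apply_of_ne_of_ne hak.ne' hkb.ne] at h
          omega
        rw [this, zero_sub]
      · intro c _ hc
        by_cases hca : c = b
        · subst hca; simp [op_zero c κ hkb.le]
        rw [op_comm c κ a b hc hca hak.ne' hkb.ne, sub_self]
      · simp
    · rw [op_op_bv, if_neg]
      · simp
      rintro ⟨_, _, h, _⟩
      simp only [Perm.coe_mul, Function.comp_apply, swap_apply_left,
        swap_apply_of_ne_of_ne hab.ne' hkb.ne'] at h
      omega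
  have h3 := op_three a κ b hak hkb w
  rw [h3, ← h1]
  rw [sub_eq_iff_eq_add] at h2
  rw [h2]
  abel

lemma quad {N : ℕ} (κ J : Fin N) :
    YY κ J * AA (κ + 1) J = AA κ J * YY κ J + AA κ J * AA (κ + 1) J := by
  apply end_ext
  intro w
  simp only [LinearMap.add_apply, Module.End.mul_apply]
  obtain ⟨b, rfl⟩ := w.surjective J
  by_cases hb : κ < b
  · have e1 : AA (κ + 1) (w b) (bv w) = ∑ a : Fin N, if (a : ℕ) < κ + 1 then op a b (bv w) else 0 := by
      rw [AA_bv, symm_apply_apply, if_pos (by omega)]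
    have e2 : YY κ (w b) (AA (κ + 1) (w b) (bv w)) = ∑ a : Fin N, if a < κ then
        ((∑ c, if (w (swap a b c) : ℕ) < (w b : ℕ) then op κ c (op a b (bv w)) else 0) -
      if (w κ : ℕ) < (w b : ℕ) then ∑ c, op c κ (op a b (bv w)) else 0) else 0 := by
      rw [e1, map_sum]
      apply Finset.sum_congr rfl
      intro a _
      rcases lt_trichotomy a κ with h | h | h
      · rw [if_pos (by omega), if_pos h, YY_op,
          swap_apply_of_ne_of_ne h.ne' hb.ne]
      · subst h
        rw [if_pos (by omega), if_neg (lt_irrefl _), YY_op]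
        simp only [swap_apply_left, lt_irrefl, if_false, sub_zero]
        apply Finset.sum_eq_zero
        intro c _
        split_ifs with hc
        · rw [op_op_bv, if_neg]
          rintro ⟨_, _, h, _⟩
          simp only [Perm.coe_mul, Function.comp_apply, swap_apply_left] at h
          omega
        · rfl
      · rw [if_neg (by omega), if_neg (by omega), map_zero]
    have e3 : AA κ (w b) (AA (κ + 1) (w b) (bv w)) = ∑ a : Fin N, if a < κ then
        op a κ (op κ b (bv w)) else 0 := by
      rw [e1, map_sum, Finset.sum_eq_single κ]
      · rw [if_pos (by omega), AA_op, symm_apply_apply, swap_apply_right, if_pos le_rfl]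
        rfl
      · intro a _ ha
        split_ifs with h
        · rw [AA_op, symm_apply_apply, swap_apply_right, if_neg]
          have : (a : ℕ) ≠ κ := fun h => ha (Fin.ext h)
          omega
        · simp
      · simp
    have e4 : AA κ (w b) (YY κ (w b) (bv w)) = ∑ a : Fin N, if a < κ then
        ((∑ c, if (w c : ℕ) < (w b : ℕ) then op a b (op κ c (bv w)) else 0) -
      if (w κ : ℕ) < (w b : ℕ) then ∑ c, op a b (op c κ (bv w)) else 0) else 0 := by
      have f1 : AA κ (w b) (∑ c, if (w c : ℕ) < (w b : ℕ) then op κ c (bv w) else 0) =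
        ∑ a : Fin N, if a < κ then
        (∑ c, if (w c : ℕ) < (w b : ℕ) then op a b (op κ c (bv w)) else 0) else 0 := by
        have : ∀ a : Fin N, (if a < κ then
          (∑ c, if (w c : ℕ) < (w b : ℕ) then op a b (op κ c (bv w)) else 0) else 0) =
          (∑ c, if a < κ then (if (w c : ℕ) < (w b : ℕ) then op a b (op κ c (bv w)) else 0) else 0) := by
          intro a; split_ifs <;> simp
        simp only [this]
        rw [Finset.sum_comm, map_sum]
        apply Finset.sum_congr rfl
        intro c _
        split_ifs with hc
        · have hcb : b ≠ c := by rintro rfl; omega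
          rw [AA_op, symm_apply_apply, swap_apply_of_ne_of_ne hb.ne' hcb, if_pos (by omega)]
          rfl
        · simp
      have f2 : AA κ (w b) (if (w κ : ℕ) < (w b : ℕ) then ∑ c, op c κ (bv w) else 0) =
        ∑ a : Fin N, if a < κ then
        (if (w κ : ℕ) < (w b : ℕ) then ∑ c, op a b (op c κ (bv w)) else 0) else 0 := by
        split_ifs with hk
        · have : ∀ a : Fin N, (if a < κ then ∑ c, op a b (op c κ (bv w)) else 0) =
            ∑ c, if a < κ then op a b (op c κ (bv w)) else 0 := by
            intro a; split_ifs <;> simp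
          simp only [this]
          rw [Finset.sum_comm, map_sum]
          apply Finset.sum_congr rfl
          intro c _
          by_cases hc : c < κ
          · rw [AA_op, symm_apply_apply, swap_apply_of_ne_of_ne (hc.trans hb).ne' hb.ne',
              if_pos (by omega)]
            rfl
          · rw [op_zero c κ (by omega)]; simp
        · simp
      rw [YY_bv, map_sub, f1, f2, ← Finset.sum_sub_distrib]
      apply Finset.sum_congr rfl
      intro a _
      by_cases h : a < κ <;> simp only [h, if_true, if_false, sub_zero]
    rw [e2, e3, e4, ← Finset.sum_add_distrib]
    apply Finset.sum_congr rfl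
    intro a _
    by_cases h : a < κ
    · simp only [h, if_true]
      exact quad_term κ a b h hb w
    · simp [h]
  · have e1 : AA (κ + 1) (w b) (bv w) = 0 := by
      rw [AA_bv, symm_apply_apply, if_neg (by omega)]
    rw [e1]
    simp only [map_zero, add_zero]
    rw [YY_bv, map_sub, map_sum, eq_comm, sub_eq_zero]
    have h1 : ∀ c : Fin N, AA κ (w b) (if (w c : ℕ) < (w b : ℕ) then op κ c (bv w) else 0) = 0 := by
      intro c
      split_ifs with hc
      · by_cases hcov : cov w κ c
        · have hne : b ≠ κ := by rintro rfl; have := hcov.2.1; omega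
          have hcb : b ≠ c := by rintro rfl; omega
          rw [AA_op, symm_apply_apply, swap_apply_of_ne_of_ne hne hcb, if_neg]
          have : (b : ℕ) ≠ κ := fun h => hne (Fin.ext h)
          omega
        · rw [op_bv, if_neg hcov, map_zero]
      · simp
    simp only [h1]
    rw [Finset.sum_const_zero, eq_comm]
    split_ifs with hk
    · rw [map_sum]
      apply Finset.sum_eq_zero
      intro a _
      by_cases hcov : cov w a κ
      · have hne : b ≠ κ := by rintro rfl; omega
        have hcb : b ≠ a := by rintro rfl; have := hcov.2.1; omega
        rw [AA_op, symm_apply_apply, swap_apply_of_ne_of_ne hcb hne, if_neg]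
        have : (b : ℕ) ≠ κ := fun h => hne (Fin.ext h)
        omega
      · rw [op_bv, if_neg hcov, map_zero]
    · simp

/-- operator of a label word; `L 0` acts first -/
def TT {N : ℕ} {E : Type*} [Ring E] (A : Fin N → E) : (m : ℕ) → (Fin m → Fin N) → E
  | 0, _ => 1
  | m + 1, L => A (L (Fin.last m)) * TT A m (fun i => L i.castSucc)

lemma TT_cons {N : ℕ} {E : Type*} [Ring E] (A : Fin N → E) (m : ℕ) (a : Fin N) (L : Fin m → Fin N) :
    TT A (m + 1) (Fin.cons a L) = TT A m L * A a := by
  induction m with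
  | zero => simp [TT]
  | succ m ih =>
    rw [TT]
    have h1 : (Fin.cons a L : Fin (m + 2) → Fin N) (Fin.last (m + 1)) = L (Fin.last m) := by
      rw [← Fin.succ_last, Fin.cons_succ]
    have h2 : (fun i : Fin (m + 1) => (Fin.cons a L : Fin (m + 2) → Fin N) i.castSucc) =
        Fin.cons a (fun i : Fin m => L i.castSucc) := by
      funext i
      refine Fin.cases ?_ ?_ i
      · simp
      · intro i; rw [← Fin.succ_castSucc, Fin.cons_succ, Fin.cons_succ]
    rw [h1, h2, ih, TT, mul_assoc]

lemma TT_append {N : ℕ} {E : Type*} [Ring E] (A : Fin N → E) (p q : ℕ)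
    (L1 : Fin p → Fin N) (L2 : Fin q → Fin N) :
    TT A (p + q) (Fin.append L1 L2) = TT A q L2 * TT A p L1 := by
  induction q with
  | zero =>
    have : Fin.append L1 L2 = L1 := by
      funext i
      exact Fin.append_left L1 L2 i
    show TT A p _ = _
    rw [this, TT, one_mul]
  | succ q ih =>
    show A _ * TT A (p + q) _ = _
    rw [TT, mul_assoc, ← ih]
    congr 2
    · exact Fin.append_right L1 L2 (Fin.last q)
    · funext i
      refine Fin.addCases ?_ ?_ i
      · intro i
        rw [Fin.append_left]
        exact Fin.append_left L1 L2 i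
      · intro i
        rw [Fin.append_right]
        exact Fin.append_right L1 L2 i.castSucc

lemma TT_zero {N : ℕ} {E : Type*} [Ring E] (A : Fin N → E) (hA : ∀ l, A l * A l = 0) (m : ℕ)
    (L : Fin m → Fin N) (i j : Fin m) (hij : (j : ℕ) = i + 1) (h : L i = L j) :
    TT A m L = 0 := by
  induction m with
  | zero => exact i.elim0
  | succ m ih =>
    rw [TT]
    by_cases hj : (j : ℕ) = m
    · obtain ⟨m, rfl⟩ : ∃ m', m = m' + 1 := ⟨i, by omega⟩
      have e1 : Fin.last (m + 1) = j := by ext; simp; omega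
      have e2 : (Fin.last m).castSucc = i := by ext; simp; omega
      rw [TT, ← mul_assoc, e1]
      simp only [e2]
      rw [h, hA, zero_mul]
    · rw [ih (fun i => L i.castSucc) ⟨i, by omega⟩ ⟨j, by omega⟩ hij h, mul_zero]

/-- decreasing words bounded by `j` -/
noncomputable def Dn {N : ℕ} {E : Type*} [Ring E] (A : Fin N → E) (j m : ℕ) : E :=
  ∑ L : Fin m → Fin N, if (∀ i i', i < i' → L i' < L i) ∧ ∀ i, (L i : ℕ) < j then TT A m L else 0

/-- `r`-increasing words -/
noncomputable def Fw {N : ℕ} {E : Type*} [Ring E] (A : Fin N → E) (r : Fin N → Fin N → Prop)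
    (m : ℕ) : E :=
  ∑ L : Fin m → Fin N, if (∀ i i', i < i' → r (L i) (L i')) then TT A m L else 0

/-- hook condition on words -/
def HookW {N m : ℕ} (r : Fin N → Fin N → Prop) (p : ℕ) (L : Fin m → Fin N) : Prop :=
  (∀ i i' : Fin m, i < i' → (i' : ℕ) < p → r (L i) (L i')) ∧
  (∀ i i' : Fin m, p - 1 ≤ (i : ℕ) → i < i' → r (L i') (L i))

/-- sum over hook words -/
noncomputable def Kw {N : ℕ} {E : Type*} [Ring E] (A : Fin N → E) (r : Fin N → Fin N → Prop)
    (m p : ℕ) : E :=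
  ∑ L : Fin m → Fin N, if HookW r p L then TT A m L else 0

lemma Dn_zero {N : ℕ} {E : Type*} [Ring E] (A : Fin N → E) (j : ℕ) : Dn A j 0 = 1 := by
  simp [Dn, TT]

lemma Fw_zero {N : ℕ} {E : Type*} [Ring E] (A : Fin N → E) (r) : Fw A r 0 = 1 := by
  simp [Fw, TT]

lemma Dn_succ {N : ℕ} {E : Type*} [Ring E] (A : Fin N → E) (j m : ℕ) :
    Dn A j (m + 1) = ∑ a : Fin N, if (a : ℕ) < j then Dn A a m * A a else 0 := by
  rw [Dn, ← (Fin.consEquiv (fun _ => Fin N)).sum_comp, Fintype.sum_prod_type]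
  apply Finset.sum_congr rfl
  intro a _
  simp only [Fin.consEquiv, Equiv.coe_fn_mk]
  have : ∀ L : Fin m → Fin N, ((∀ i i' : Fin (m + 1), i < i' →
      (Fin.cons a L : Fin (m + 1) → Fin N) i' < (Fin.cons a L : Fin (m + 1) → Fin N) i) ∧
      ∀ i, ((Fin.cons a L : Fin (m + 1) → Fin N) i : ℕ) < j) ↔
      ((a : ℕ) < j ∧ (∀ i i', i < i' → L i' < L i) ∧ ∀ i, (L i : ℕ) < (a : ℕ)) := by
    intro L
    constructor
    · rintro ⟨h1, h2⟩
      refine ⟨by simpa using h2 0, ?_, ?_⟩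
      · intro i i' h
        simpa using h1 i.succ i'.succ (by simpa using h)
      · intro i
        simpa using h1 0 i.succ (by simp)
    · rintro ⟨h1, h2, h3⟩
      refine ⟨?_, ?_⟩
      · intro i i'
        refine Fin.cases ?_ ?_ i <;> refine Fin.cases ?_ ?_ i'
        · simp
        · intro i' _; simpa using h3 i'
        · simp
        · intro i' i h; simpa using h2 i i' (by simpa using h)
      · intro i
        refine Fin.cases ?_ ?_ i
        · simpa
        · intro i; simpa using (h3 i).trans h1
  simp only [this, TT_cons]
  by_cases h : (a : ℕ) < j
  · simp only [h, true_and, if_true]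
    rw [Dn, Finset.sum_mul]
    apply Finset.sum_congr rfl
    intro L _
    rw [ite_mul, zero_mul]
  · simp [h]

lemma Dn_step {N : ℕ} {E : Type*} [Ring E] (A : Fin N → E) (j : Fin N) (m : ℕ) :
    Dn A (j + 1) (m + 1) = Dn A j (m + 1) + Dn A j m * A j := by
  rw [Dn_succ, Dn_succ, ← sub_eq_iff_eq_add', ← Finset.sum_sub_distrib, Finset.sum_eq_single j]
  · simp
  · intro b _ hb
    have : ((b : ℕ) < j + 1) ↔ (b : ℕ) < j := by
      have : (b : ℕ) ≠ j := fun h => hb (Fin.ext h)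
      omega
    simp [this]
  · simp

lemma Fw_gt {N : ℕ} {E : Type*} [Ring E] (A : Fin N → E) (m : ℕ) :
    Fw A (fun x y => y < x) m = Dn A N m := by
  rw [Fw, Dn]
  apply Finset.sum_congr rfl
  intro L _
  have : ((∀ i i', i < i' → L i' < L i) ∧ ∀ i, (L i : ℕ) < N) ↔ (∀ i i', i < i' → L i' < L i) :=
    ⟨fun h => h.1, fun h => ⟨h, fun i => (L i).2⟩⟩
  by_cases h : (∀ i i', i < i' → L i' < L i)
  · rw [if_pos h, if_pos (this.2 h)]
  · rw [if_neg h, if_neg (fun h' => h (this.1 h'))]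

lemma YY_step {N : ℕ} (k : ℕ) (j : Fin N) :
    YY (N := N) k (j + 1) = YY k j + (AA (k + 1) j - AA k j) := by
  rw [YY, YY, ← sub_eq_iff_eq_add', ← Finset.sum_sub_distrib, Finset.sum_eq_single j]
  · simp
  · intro b _ hb
    have : ((b : ℕ) < j + 1) ↔ (b : ℕ) < j := by
      have : (b : ℕ) ≠ j := fun h => hb (Fin.ext h)
      omega
    simp [this]
  · simp

lemma Dn_YY {N : ℕ} (κ : Fin N) (j : ℕ) (hj : j ≤ N) (m : ℕ) :
    Dn (AA (N := N) (κ + 1)) j (m + 1) =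
      Dn (AA (N := N) κ) j (m + 1) + Dn (AA (N := N) κ) j m * YY κ j := by
  induction j generalizing m with
  | zero => simp [Dn_succ, YY]
  | succ j ih =>
    have ih := ih (by omega)
    obtain ⟨J, rfl⟩ : ∃ J : Fin N, (J : ℕ) = j := ⟨⟨j, by omega⟩, rfl⟩
    rw [Dn_step, Dn_step, YY_step, ih]
    have q := quad κ J
    have sq := AA_sq (κ : ℕ) J
    cases m with
    | zero =>
      simp only [Dn_zero, one_mul]
      abel
    | succ m =>
      rw [ih, Dn_step]
      have e1 : (Dn (AA (N := N) κ) J (m + 1) + Dn (AA (N := N) κ) J m * YY κ J) * AA (κ + 1) J =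
        Dn (AA (N := N) κ) J (m + 1) * AA (κ + 1) J +
          Dn (AA (N := N) κ) J m * (AA κ J * YY κ J + AA κ J * AA (κ + 1) J) := by
        rw [add_mul, mul_assoc, q]
      have e2 : (Dn (AA (N := N) κ) J (m + 1) + Dn (AA (N := N) κ) J m * AA κ J) *
          (YY κ J + (AA (κ + 1) J - AA κ J)) =
          Dn (AA (N := N) κ) J (m + 1) * (YY κ J + (AA (κ + 1) J - AA κ J)) +
          Dn (AA (N := N) κ) J m * (AA κ J * YY κ J + AA κ J * AA (κ + 1) J - AA κ J * AA κ J) := by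
        noncomm_ring
      rw [e1, e2, sq]
      noncomm_ring

lemma Dn_full {N : ℕ} (κ : Fin N) (m : ℕ) :
    Dn (AA (N := N) (κ + 1)) N (m + 1) =
      Dn (AA (N := N) κ) N (m + 1) + Dn (AA (N := N) κ) N m * XX κ := by
  rw [Dn_YY κ N le_rfl, YY_full]

lemma AA_zero {N : ℕ} (l : Fin N) : AA 0 l = 0 := by
  apply end_ext
  intro w
  rw [AA_bv]; simp

lemma Fw_mul {N : ℕ} {E : Type*} [Ring E] (A : Fin N → E) (hA : ∀ l, A l * A l = 0)
    (r : Fin N → Fin N → Prop) (hr : ∀ x, ¬ r x x) (htr : ∀ x y z, r x y → r y z → r x z)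
    (hto : ∀ x y, r x y ∨ x = y ∨ r y x) (p q : ℕ) (hp : 1 ≤ p) (hq : 1 ≤ q) :
    Fw A (fun x y => r y x) q * Fw A r p = Kw A r (p + q) p + Kw A r (p + q) (p + 1) := by
  have e : Fw A (fun x y => r y x) q * Fw A r p = ∑ L : Fin (p + q) → Fin N,
      if (∀ i i' : Fin (p + q), i < i' → (i' : ℕ) < p → r (L i) (L i')) ∧
        (∀ i i' : Fin (p + q), p ≤ (i : ℕ) → i < i' → r (L i') (L i)) then TT A (p + q) L else 0 := by
    rw [← (Fin.appendEquiv p q).sum_comp, Fintype.sum_prod_type, Fw, Fw, Finset.sum_mul_sum,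
      Finset.sum_comm]
    apply Finset.sum_congr rfl
    intro L1 _
    apply Finset.sum_congr rfl
    intro L2 _
    simp only [Fin.appendEquiv, Equiv.coe_fn_mk]
    have h : ((∀ i i' : Fin (p + q), i < i' → (i' : ℕ) < p →
          r (Fin.append L1 L2 i) (Fin.append L1 L2 i')) ∧
        (∀ i i' : Fin (p + q), p ≤ (i : ℕ) → i < i' →
          r (Fin.append L1 L2 i') (Fin.append L1 L2 i))) ↔
        ((∀ i i', i < i' → r (L2 i') (L2 i)) ∧ (∀ i i', i < i' → r (L1 i) (L1 i'))) := by
      constructor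
      · rintro ⟨h1, h2⟩
        constructor
        · intro i i' h
          have := h2 (Fin.natAdd p i) (Fin.natAdd p i') (by simp) (by rw [Fin.lt_def] at h ⊢; simp; omega)
          rwa [Fin.append_right, Fin.append_right] at this
        · intro i i' h
          have := h1 (Fin.castAdd q i) (Fin.castAdd q i') (by exact h) (by simp)
          rwa [Fin.append_left, Fin.append_left] at this
      · rintro ⟨h1, h2⟩
        constructor
        · intro i i' h h'
          obtain ⟨j, rfl⟩ : ∃ j : Fin p, i = Fin.castAdd q j := ⟨⟨i, by omega⟩, rfl⟩
          obtain ⟨j', rfl⟩ : ∃ j : Fin p, i' = Fin.castAdd q j := ⟨⟨i', by omega⟩, rfl⟩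
          rw [Fin.append_left, Fin.append_left]
          exact h2 _ _ h
        · intro i i' h h'
          obtain ⟨j, rfl⟩ : ∃ j : Fin q, i = Fin.natAdd p j :=
            ⟨⟨i - p, by omega⟩, by ext; simp; omega⟩
          obtain ⟨j', rfl⟩ : ∃ j : Fin q, i' = Fin.natAdd p j :=
            ⟨⟨i' - p, by omega⟩, by ext; simp; omega⟩
          rw [Fin.append_right, Fin.append_right]
          apply h1
          rw [Fin.lt_def] at h' ⊢; simp at h'; omega
    simp only [h, TT_append]
    by_cases g1 : (∀ i i', i < i' → r (L2 i') (L2 i)) <;>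
    by_cases g2 : (∀ i i', i < i' → r (L1 i) (L1 i'))
    · rw [if_pos g1, if_pos g2, if_pos ⟨g1, g2⟩]
    · rw [if_pos g1, if_neg g2, if_neg (fun h => g2 h.2), mul_zero]
    · rw [if_neg g1, zero_mul, if_neg (fun h => g1 h.1)]
    · rw [if_neg g1, zero_mul, if_neg (fun h => g1 h.1)]
  rw [e, Kw, Kw, ← Finset.sum_add_distrib]
  apply Finset.sum_congr rfl
  intro L _
  set u : Fin (p + q) := ⟨p - 1, by omega⟩ with hu
  set v : Fin (p + q) := ⟨p, by omega⟩ with hv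
  have huv : u < v := by simp only [hu, hv, Fin.mk_lt_mk]; omega
  have hvu : (v : ℕ) = u + 1 := by simp only [hu, hv]; omega
  have k1 : HookW r p L ↔ ((∀ i i' : Fin (p + q), i < i' → (i' : ℕ) < p → r (L i) (L i')) ∧
        (∀ i i' : Fin (p + q), p ≤ (i : ℕ) → i < i' → r (L i') (L i))) ∧ r (L v) (L u) := by
    constructor
    · rintro ⟨h1, h2⟩
      exact ⟨⟨h1, fun i i' h h' => h2 i i' (by omega) h'⟩, h2 u v le_rfl huv⟩
    · rintro ⟨⟨h1, h2⟩, h3⟩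
      refine ⟨h1, fun i i' h h' => ?_⟩
      by_cases hi : p ≤ (i : ℕ)
      · exact h2 i i' hi h'
      · have : i = u := by ext; simp only [hu]; omega
        subst this
        by_cases hi' : i' = v
        · subst hi'; exact h3
        · refine htr _ _ _ (h2 v i' le_rfl ?_) h3
          have : (i' : ℕ) ≠ v := fun h => hi' (Fin.ext h)
          omega
  have k2 : HookW r (p + 1) L ↔ ((∀ i i' : Fin (p + q), i < i' → (i' : ℕ) < p → r (L i) (L i')) ∧
        (∀ i i' : Fin (p + q), p ≤ (i : ℕ) → i < i' → r (L i') (L i))) ∧ r (L u) (L v) := by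
    constructor
    · rintro ⟨h1, h2⟩
      exact ⟨⟨fun i i' h h' => h1 i i' h (by omega), fun i i' h h' => h2 i i' (by omega) h'⟩,
        h1 u v huv (by simp [hv])⟩
    · rintro ⟨⟨h1, h2⟩, h3⟩
      refine ⟨fun i i' h h' => ?_, fun i i' h h' => h2 i i' (by omega) h'⟩
      by_cases hi : (i' : ℕ) < p
      · exact h1 i i' h hi
      · have : i' = v := by ext; simp only [hv]; omega
        subst this
        by_cases hi' : i = u
        · subst hi'; exact h3
        · refine htr _ _ _ (h1 i u ?_ ?_) h3
          · have : (i : ℕ) ≠ u := fun h => hi' (Fin.ext h)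
            omega
          · simp only [hu]; omega
  simp only [k1, k2]
  rcases hto (L u) (L v) with h | h | h
  · have h' : ¬ r (L v) (L u) := fun h' => hr _ (htr _ _ _ h h')
    simp [h, h']
  · rw [TT_zero A hA _ L u v hvu h]; simp
  · have h' : ¬ r (L u) (L v) := fun h' => hr _ (htr _ _ _ h h')
    simp [h, h']

lemma Kw_self {N : ℕ} {E : Type*} [Ring E] (A : Fin N → E) (r : Fin N → Fin N → Prop) (m : ℕ) :
    Kw A r m m = Fw A r m := by
  rw [Kw, Fw]
  apply Finset.sum_congr rfl
  intro L _
  have : HookW r m L ↔ (∀ i i', i < i' → r (L i) (L i')) := by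
    constructor
    · intro h i i' hi; exact h.1 i i' hi i'.2
    · intro h
      refine ⟨fun i i' hi _ => h i i' hi, fun i i' hi hi' => ?_⟩
      omega
  simp only [this]

lemma Kw_one {N : ℕ} {E : Type*} [Ring E] (A : Fin N → E) (r : Fin N → Fin N → Prop) (m : ℕ) :
    Kw A r m 1 = Fw A (fun x y => r y x) m := by
  rw [Kw, Fw]
  apply Finset.sum_congr rfl
  intro L _
  have : HookW r 1 L ↔ (∀ i i', i < i' → r (L i') (L i)) := by
    constructor
    · intro h i i' hi; exact h.2 i i' (by simp) hi
    · intro h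
      refine ⟨fun i i' hi hi' => ?_, fun i i' _ hi' => h i i' hi'⟩
      omega
  simp only [this]

lemma len_cast {N : ℕ} (w : Equiv.Perm (Fin N)) :
    (len w : ℤ) = ∑ x : Fin N, ∑ y : Fin N, if x < y ∧ w y < w x then 1 else 0 := by
  rw [len, Finset.card_filter, ← Fintype.sum_prod_type', Nat.cast_sum]
  apply Finset.sum_congr rfl
  intro p _
  by_cases h : p.1 < p.2 ∧ w p.2 < w p.1
  · rw [if_pos h, if_pos h]; simp
  · rw [if_neg h, if_neg h]; simp

lemma len_cast_swap {N : ℕ} (w s : Equiv.Perm (Fin N)) (hs : ∀ x, s (s x) = x) :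
    (len (w * s) : ℤ) = ∑ x : Fin N, ∑ y : Fin N, if s x < s y ∧ w y < w x then 1 else 0 := by
  rw [len_cast, ← Equiv.sum_comp s]
  apply Finset.sum_congr rfl
  intro x _
  rw [← Equiv.sum_comp s]
  apply Finset.sum_congr rfl
  intro y _
  simp only [Perm.mul_apply, hs]

lemma len_swap {N : ℕ} (w : Equiv.Perm (Fin N)) (a b : Fin N) (hab : a < b) (hw : w a < w b) :
    (len (w * swap a b) : ℤ) = len w + 1 +
      2 * ∑ c : Fin N, if a < c ∧ c < b ∧ w a < w c ∧ w c < w b then 1 else 0 := by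
  rw [len_cast_swap _ _ (fun x => by rw [← Perm.mul_apply, swap_mul_self, Perm.one_apply]), len_cast]
  set I : Fin N → ℤ := fun c => if a < c ∧ c < b ∧ w c < w a then 1 else 0 with hI
  set J : Fin N → ℤ := fun c => if a < c ∧ c < b ∧ w c < w b then 1 else 0 with hJ
  set K : Fin N → ℤ := fun c => if a < c ∧ c < b ∧ w a < w c then 1 else 0 with hK
  set L : Fin N → ℤ := fun c => if a < c ∧ c < b ∧ w b < w c then 1 else 0 with hL
  have key : ∀ x y : Fin N, (if (swap a b x < swap a b y) ∧ w y < w x then (1 : ℤ) else 0) =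
      (if x < y ∧ w y < w x then 1 else 0) + (if x = b then (if y = a then 1 else 0) else 0)
      - (if x = a then I y else 0) + (if x = b then J y else 0)
      + (if y = a then K x else 0) - (if y = b then L x else 0) := by
    intro x y
    have inj : ∀ x y, x ≠ y → w x ≠ w y := fun x y h => w.injective.ne h
    have hne := hab.ne
    simp only [hI, hJ, hK, hL]
    by_cases hxa : x = a
    · subst hxa
      rw [swap_apply_left]
      by_cases hyx : y = x
      · subst hyx; simp [hne]
      by_cases hyb : y = b
      · subst hyb
        have h1 : ¬ (w y < w x) := by omega
        simp [h1, hne]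
      · rw [swap_apply_of_ne_of_ne hyx hyb]
        have := inj y x hyx
        simp only [hne, hyx, hyb, if_true, if_false]
        split_ifs <;> omega
    by_cases hxb : x = b
    · subst hxb
      rw [swap_apply_right]
      by_cases hyx : y = x
      · subst hyx; simp [hne.symm]
      by_cases hyb : y = a
      · subst hyb
        simp [hab, hw, hab.not_gt, hne, hne.symm]
      · rw [swap_apply_of_ne_of_ne hyb hyx]
        have := inj y x hyx
        simp only [hne.symm, hyx, hyb, if_true, if_false]
        split_ifs <;> omega
    rw [swap_apply_of_ne_of_ne hxa hxb]
    simp only [hxa, hxb, if_false]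
    have := inj x a hxa
    have := inj x b hxb
    by_cases hya : y = a
    · subst hya
      rw [swap_apply_left]
      simp only [hne, if_true, if_false]
      split_ifs <;> omega
    by_cases hyb : y = b
    · subst hyb
      rw [swap_apply_right]
      simp only [hne.symm, if_true, if_false]
      split_ifs <;> omega
    rw [swap_apply_of_ne_of_ne hya hyb]
    simp [hya, hyb]
  simp only [key, Finset.sum_add_distrib, Finset.sum_sub_distrib]
  simp only [Finset.sum_ite_eq', Finset.sum_ite_irrel, Finset.sum_const_zero, Finset.mem_univ, if_true]
  have : ∑ c : Fin N, (J c + K c - I c - L c) = 2 * ∑ c : Fin N, if a < c ∧ c < b ∧ w a < w c ∧ w c < w b then 1 else 0 := by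
    rw [Finset.mul_sum]
    apply Finset.sum_congr rfl
    intro c _
    simp only [hI, hJ, hK, hL]
    have h1 : c ≠ a → w c ≠ w a := fun h => w.injective.ne h
    have h2 : c ≠ b → w c ≠ w b := fun h => w.injective.ne h
    split_ifs <;> omega
  rw [← this]
  simp only [Finset.sum_add_distrib, Finset.sum_sub_distrib]
  ring

lemma len_cov {N : ℕ} (w : Equiv.Perm (Fin N)) (a b : Fin N) (hab : a < b) :
    len (w * swap a b) = len w + 1 ↔ cov w a b := by
  have nn : ∀ w : Equiv.Perm (Fin N), ∀ c : Fin N, c ∈ Finset.univ →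
    (0 : ℤ) ≤ if a < c ∧ c < b ∧ w a < w c ∧ w c < w b then 1 else 0 := by
      intro w c _; split_ifs <;> simp
  rcases lt_trichotomy (w a) (w b) with h | h | h
  · have e := len_swap w a b hab h
    constructor
    · intro h'
      refine ⟨hab, h, ?_⟩
      rw [h'] at e
      have : ∑ c : Fin N, (if a < c ∧ c < b ∧ w a < w c ∧ w c < w b then (1 : ℤ) else 0) = 0 := by
        push_cast at e; linarith
      rw [Finset.sum_eq_zero_iff_of_nonneg (nn w)] at this
      intro c h1 h2 h3
      have := this c (Finset.mem_univ _)
      rw [if_pos ⟨h1, h2, h3⟩] at this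
      simp at this
    · rintro ⟨_, _, h3⟩
      rw [Finset.sum_eq_zero] at e
      · push_cast at e; omega
      · intro c _
        rw [if_neg]
        rintro ⟨h1, h2, h4⟩
        exact h3 c h1 h2 h4
  · exact absurd (w.injective h) hab.ne
  · constructor
    · intro h'
      have e := len_swap (w * swap a b) a b hab (by simpa using h)
      rw [mul_assoc, swap_mul_self, mul_one] at e
      have := Finset.sum_nonneg (nn (w * swap a b))
      omega
    · intro h'
      exact absurd h'.2.1 h.not_gt

lemma len_desc {N : ℕ} (w : Equiv.Perm (Fin N)) (i j : Fin N) (hij : (j : ℕ) = i + 1)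
    (h : w j < w i) : len (w * swap i j) + 1 = len w := by
  have hlt : i < j := by rw [Fin.lt_def]; omega
  have := (len_cov (w * swap i j) i j hlt).2
    ⟨hlt, by simpa using h, fun c h1 h2 => by omega⟩
  rw [mul_assoc, swap_mul_self, mul_one] at this
  omega

lemma len_le {N : ℕ} (w : Equiv.Perm (Fin N)) : len w ≤ N * N := by
  refine (Finset.card_le_univ _).trans ?_
  simp

lemma exists_desc {N : ℕ} (w : Equiv.Perm (Fin N)) (h : w ≠ 1) :
    ∃ i j : Fin N, (j : ℕ) = i + 1 ∧ w j < w i := by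
  by_contra! hc
  apply h
  have hmono : StrictMono w := by
    rcases N with _ | N
    · intro a; exact a.elim0
    · rw [Fin.strictMono_iff_lt_succ]
      intro i
      refine lt_of_le_of_ne (hc i.castSucc i.succ (by simp)) ?_
      exact w.injective.ne (Fin.castSucc_lt_succ).ne
  have : (hmono.orderIsoOfSurjective w w.surjective) = OrderIso.refl _ := Subsingleton.elim _ _
  ext x
  have := congrArg (fun f => f x) this
  simpa using congrArg Fin.val this

/-- the action of a transposition on polynomials -/
noncomputable abbrev sw {N : ℕ} (i j : Fin N) :
    MvPolynomial (Fin N) ℤ →ₐ[ℤ] MvPolynomial (Fin N) ℤ := rename (swap i j)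

/-- divided difference with `Fin` indices -/
noncomputable def del {N : ℕ} (i j : Fin N) (f : MvPolynomial (Fin N) ℤ) :
    MvPolynomial (Fin N) ℤ :=
  if h : (X i - X j) ∣ (f - sw i j f) then h.choose else 0

lemma divDiff_eq {N : ℕ} [NeZero N] (l : ℕ) (f : MvPolynomial (Fin N) ℤ) :
    divDiff l f = del (pos N l) (pos N (l + 1)) f := rfl

lemma del_dvd {N : ℕ} (i j : Fin N) (f : MvPolynomial (Fin N) ℤ) :
    (X i - X j) ∣ (f - sw i j f) := by
  induction f using MvPolynomial.induction_on with
  | C a => simp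
  | add p q hp hq =>
    rw [map_add, add_sub_add_comm]; exact dvd_add hp hq
  | mul_X p l hp =>
    have : p * X l - sw i j (p * X l) = (p - sw i j p) * X l + sw i j p * (X l - sw i j (X l)) := by
      rw [map_mul]; ring
    rw [this]
    refine dvd_add (hp.mul_right _) (Dvd.dvd.mul_left ?_ _)
    rw [rename_X]
    by_cases hi : l = i
    · subst hi; rw [swap_apply_left]
    by_cases hj : l = j
    · subst hj; rw [swap_apply_right]; exact ⟨-1, by ring⟩
    · rw [swap_apply_of_ne_of_ne hi hj]; simp

lemma del_spec {N : ℕ} (i j : Fin N) (f : MvPolynomial (Fin N) ℤ) :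
    (X i - X j) * del i j f = f - sw i j f := by
  rw [del, dif_pos (del_dvd i j f)]
  exact (del_dvd i j f).choose_spec.symm

lemma XX_ne {N : ℕ} (i j : Fin N) (h : i ≠ j) :
    (X i - X j : MvPolynomial (Fin N) ℤ) ≠ 0 := by
  rw [sub_ne_zero]
  exact fun h' => h (X_injective h')

lemma del_unique {N : ℕ} (i j : Fin N) (h : i ≠ j) (f g : MvPolynomial (Fin N) ℤ)
    (hg : (X i - X j) * g = f - sw i j f) : del i j f = g :=
  mul_left_cancel₀ (XX_ne i j h) ((del_spec i j f).trans hg.symm)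

lemma del_add {N : ℕ} (i j : Fin N) (h : i ≠ j) (f g : MvPolynomial (Fin N) ℤ) :
    del i j (f + g) = del i j f + del i j g := by
  apply del_unique i j h
  rw [mul_add, del_spec, del_spec, map_add]; ring

lemma del_mul {N : ℕ} (i j : Fin N) (h : i ≠ j) (f g : MvPolynomial (Fin N) ℤ) :
    del i j (f * g) = del i j f * g + sw i j f * del i j g := by
  apply del_unique i j h
  rw [map_mul]
  linear_combination g * del_spec i j f + sw i j f * del_spec i j g

lemma del_sym {N : ℕ} (i j : Fin N) (h : i ≠ j) (f : MvPolynomial (Fin N) ℤ)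
    (hf : sw i j f = f) : del i j f = 0 := by
  apply del_unique i j h
  rw [hf]; ring

lemma sw_sw {N : ℕ} (i j : Fin N) (f : MvPolynomial (Fin N) ℤ) : sw i j (sw i j f) = f := by
  rw [rename_rename]
  have : (swap i j ∘ swap i j : Fin N → Fin N) = id := by
    funext x
    show (swap i j * swap i j) x = x
    rw [swap_mul_self]; rfl
  rw [this, rename_id_apply]

lemma sw_del {N : ℕ} (i j : Fin N) (h : i ≠ j) (f : MvPolynomial (Fin N) ℤ) :
    sw i j (del i j f) = del i j f := by
  symm
  apply del_unique i j h
  have := congrArg (sw i j) (del_spec i j f)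
  rw [map_mul, map_sub, map_sub, sw_sw, rename_X, rename_X, swap_apply_left, swap_apply_right] at this
  linear_combination - this

lemma del_del {N : ℕ} (i j : Fin N) (h : i ≠ j) (f : MvPolynomial (Fin N) ℤ) :
    del i j (del i j f) = 0 := del_sym i j h _ (sw_del i j h f)

lemma del_X_i {N : ℕ} (i j : Fin N) (h : i ≠ j) (f : MvPolynomial (Fin N) ℤ) :
    del i j (X i * f) = f + X j * del i j f := by
  have : del i j (X i) = 1 := by
    apply del_unique i j h; rw [rename_X, swap_apply_left]; ring
  rw [del_mul i j h, this, rename_X, swap_apply_left]; ring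

lemma del_X_j {N : ℕ} (i j : Fin N) (h : i ≠ j) (f : MvPolynomial (Fin N) ℤ) :
    del i j (X j * f) = X i * del i j f - f := by
  have : del i j (X j) = -1 := by
    apply del_unique i j h; rw [rename_X, swap_apply_right]; ring
  rw [del_mul i j h, this, rename_X, swap_apply_right]; ring

lemma del_sym_mul {N : ℕ} (i j : Fin N) (h : i ≠ j) (c f : MvPolynomial (Fin N) ℤ)
    (hc : sw i j c = c) : del i j (c * f) = c * del i j f := by
  rw [del_mul i j h, del_sym i j h c hc, hc]; ring

lemma del_X_other {N : ℕ} (i j l : Fin N) (h : i ≠ j) (hi : l ≠ i) (hj : l ≠ j)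
    (f : MvPolynomial (Fin N) ℤ) :
    del i j (X l * f) = X l * del i j f := by
  apply del_sym_mul i j h
  rw [rename_X, swap_apply_of_ne_of_ne hi hj]

lemma del_mem {N : ℕ} (i j : Fin N) (h : i ≠ j) (f : MvPolynomial (Fin N) ℤ)
    (hf : f ∈ symIdeal N) : del i j f ∈ symIdeal N := by
  unfold symIdeal at hf
  induction hf using Submodule.span_induction with
  | mem x hx => rw [del_sym i j h x (hx.1 _)]; exact zero_mem _
  | zero => rw [del_sym i j h 0 (map_zero _)]; exact zero_mem _
  | add x y _ _ hx hy => rw [del_add i j h]; exact add_mem hx hy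
  | smul a x hx' hx =>
    rw [smul_eq_mul, del_mul i j h]
    exact add_mem (Ideal.mul_mem_left _ _ hx') (Ideal.mul_mem_left _ _ hx)

/-- additive version -/
noncomputable def delA {N : ℕ} (i j : Fin N) (h : i ≠ j) :
    MvPolynomial (Fin N) ℤ →ₗ[ℤ] MvPolynomial (Fin N) ℤ :=
  (AddMonoidHom.mk' (del i j) (del_add i j h)).toIntLinearMap

lemma delA_apply {N : ℕ} (i j : Fin N) (h : i ≠ j) (f) : delA i j h f = del i j f := rfl

lemma del_zero {N : ℕ} (i j : Fin N) (h : i ≠ j) : del i j 0 = 0 := del_sym i j h 0 (map_zero _)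

lemma del_sub {N : ℕ} (i j : Fin N) (h : i ≠ j) (f g) :
  del i j (f - g) = del i j f - del i j g := (delA i j h).map_sub f g

lemma sw_comm {N : ℕ} (i j k l : Fin N) (hik : i ≠ k) (hil : i ≠ l) (hjk : j ≠ k) (hjl : j ≠ l)
    (f : MvPolynomial (Fin N) ℤ) : sw i j (sw k l f) = sw k l (sw i j f) := by
  rw [rename_rename, rename_rename]
  congr 1
  have : swap i j * swap k l = swap k l * swap i j := by
    refine Equiv.Perm.Disjoint.commute ?_
    intro x
    by_cases hi : x = i
    · subst hi; right; exact swap_apply_of_ne_of_ne hik hil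
    by_cases hj : x = j
    · subst hj; right; exact swap_apply_of_ne_of_ne hjk hjl
    left; exact swap_apply_of_ne_of_ne hi hj
  rw [← Perm.coe_mul, this, Perm.coe_mul]

lemma del_comm {N : ℕ} (i j k l : Fin N) (hij : i ≠ j) (hkl : k ≠ l) (hik : i ≠ k) (hil : i ≠ l)
    (hjk : j ≠ k) (hjl : j ≠ l)
    (f : MvPolynomial (Fin N) ℤ) : del i j (del k l f) = del k l (del i j f) := by
  apply del_unique i j hij
  have e : sw i j (del k l f) = del k l (sw i j f) := by
    symm
    apply del_unique k l hkl
    have := congrArg (sw i j) (del_spec k l f)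
    rw [map_mul, map_sub, map_sub, rename_X, rename_X,
      swap_apply_of_ne_of_ne hik.symm hjk.symm, swap_apply_of_ne_of_ne hil.symm hjl.symm] at this
    rw [this, sw_comm i j k l hik hil hjk hjl]
  rw [e, ← del_sub k l hkl, ← del_spec, del_sym_mul k l hkl]
  rw [map_sub, rename_X, rename_X, swap_apply_of_ne_of_ne hik hil, swap_apply_of_ne_of_ne hjk hjl]

lemma del_braid_aux {N : ℕ} (i j k : Fin N) (hij : i ≠ j) (hjk : j ≠ k) (hik : i ≠ k)
    (f : MvPolynomial (Fin N) ℤ) :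
    (X i - X j) * (X j - X k) * (X i - X k) * del i j (del j k (del i j f)) =
      f - sw i j f - sw j k f + sw j k (sw i j f) + sw i j (sw j k f) - sw i j (sw j k (sw i j f)) := by
  set f1 := del i j f with hf1
  set f2 := del j k f1 with hf2
  have h1 := del_spec i j f
  have h2 := del_spec j k f1
  have h3 := del_spec i j f2
  have h4 := congrArg (sw i j) h2
  have h5 := congrArg (sw j k) h1
  have h6 := congrArg (sw i j) h5
  have h7 := sw_del i j hij f
  rw [← hf1] at h1 h5 h6 h7
  rw [← hf2] at h2 h4
  simp only [map_mul, map_sub, rename_X, swap_apply_left, swap_apply_right,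
    swap_apply_of_ne_of_ne hij hik, swap_apply_of_ne_of_ne hik.symm hjk.symm, h7] at h4 h5 h6
  linear_combination (X j - X k) * (X i - X k) * h3 + (X i - X k) * h2 - (X j - X k) * h4
    + h1 - h5 + h6

lemma sw_braid {N : ℕ} (i j k : Fin N) (hij : i ≠ j) (hjk : j ≠ k) (hik : i ≠ k)
    (f : MvPolynomial (Fin N) ℤ) :
    sw i j (sw j k (sw i j f)) = sw j k (sw i j (sw j k f)) := by
  rw [rename_rename, rename_rename, rename_rename, rename_rename]
  congr 2
  funext x
  simp only [Function.comp_apply]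
  by_cases hi : x = i
  · subst hi
    simp [swap_apply_of_ne_of_ne hij hik, swap_apply_of_ne_of_ne hik.symm hjk.symm]
  by_cases hj : x = j
  · subst hj
    simp [swap_apply_of_ne_of_ne hij hik, swap_apply_of_ne_of_ne hik.symm hjk.symm]
  by_cases hk : x = k
  · subst hk
    simp [swap_apply_of_ne_of_ne hij hik, swap_apply_of_ne_of_ne hik.symm hjk.symm]
  simp [swap_apply_of_ne_of_ne hi hj, swap_apply_of_ne_of_ne hj hk]

lemma del_braid {N : ℕ} (i j k : Fin N) (hij : i ≠ j) (hjk : j ≠ k) (hik : i ≠ k)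
    (f : MvPolynomial (Fin N) ℤ) :
    del i j (del j k (del i j f)) = del j k (del i j (del j k f)) := by
  have a := del_braid_aux i j k hij hjk hik f
  have b := del_braid_aux k j i hjk.symm hij.symm hik.symm f
  have c : ∀ i j : Fin N, i ≠ j → ∀ f, del j i f = - del i j f := by
    intro i j h f
    apply del_unique j i h.symm
    have : sw j i f = sw i j f := by rw [sw, swap_comm]
    rw [this]
    linear_combination del_spec i j f
  have d : ∀ (i j : Fin N), sw j i = sw i j := fun i j => by rw [sw, swap_comm]
  have n : ∀ i j : Fin N, i ≠ j → ∀ f, del i j (-f) = - del i j f := fun i j h f =>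
    (delA i j h).map_neg f
  simp only [c j k hjk, c i j hij, n j k hjk, n i j hij, d j k, d i j] at b
  have e := sw_braid i j k hij hjk hik f
  have nz : (X i - X j) * (X j - X k) * (X i - X k) ≠ (0 : MvPolynomial (Fin N) ℤ) :=
    mul_ne_zero (mul_ne_zero (XX_ne _ _ hij) (XX_ne _ _ hjk)) (XX_ne _ _ hik)
  apply mul_left_cancel₀ nz
  linear_combination a - b - e

lemma pos_val {N : ℕ} [NeZero N] (i : ℕ) (h1 : 1 ≤ i) (h2 : i ≤ N) : (pos N i : ℕ) = i - 1 := by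
  simp only [pos]; exact Nat.mod_eq_of_lt (by omega)

lemma pos_succ {N : ℕ} [NeZero N] (i : Fin N) : pos N ((i : ℕ) + 1) = i := by
  ext; rw [pos_val _ (by omega) (by omega)]; omega

lemma redWordAux_cases (N : ℕ) [NeZero N] (f : ℕ) (w : Equiv.Perm (Fin N)) :
    (w = 1 ∧ redWordAux N (f + 1) w = []) ∨
    ∃ i j : Fin N, (j : ℕ) = i + 1 ∧ w j < w i ∧
      ∀ f', redWordAux N (f' + 1) w = redWordAux N f' (w * swap i j) ++ [(i : ℕ) + 1] := by
  cases h : ((List.range (N - 1)).map (· + 1)).find? (fun i => decide (val w (i + 1) < val w i)) with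
  | none =>
    left
    constructor
    · by_contra hw
      obtain ⟨i, j, hij, hlt⟩ := exists_desc w hw
      rw [List.find?_eq_none] at h
      have := h ((i : ℕ) + 1) (by simp; omega)
      apply this
      rw [decide_eq_true_iff, val, val, pos_succ, ← hij, pos_succ]
      exact Nat.succ_lt_succ hlt
    · rw [redWordAux, h]
  | some l =>
    right
    have h1 := List.mem_of_find?_eq_some h
    have h2 := List.find?_some h
    simp only [List.mem_map, List.mem_range] at h1
    obtain ⟨i, hi, rfl⟩ := h1
    obtain ⟨a, ha⟩ : ∃ a : Fin N, (a : ℕ) = i := ⟨⟨i, by omega⟩, rfl⟩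
    obtain ⟨b, hb⟩ : ∃ b : Fin N, (b : ℕ) = i + 1 := ⟨⟨i + 1, by omega⟩, rfl⟩
    subst ha
    refine ⟨a, b, hb, ?_, ?_⟩
    · rw [decide_eq_true_iff, val, val, pos_succ, ← hb, pos_succ] at h2
      exact Nat.lt_of_succ_lt_succ h2
    · intro f'
      rw [redWordAux, h]
      simp only [t]
      rw [pos_succ, ← hb, pos_succ]

lemma redWordAux_fuel (N : ℕ) [NeZero N] (f f' : ℕ) (w : Equiv.Perm (Fin N)) (h : len w ≤ f)
    (h' : len w ≤ f') : redWordAux N f w = redWordAux N f' w := by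
  have z : ∀ f w, len w = 0 → redWordAux N f w = [] := by
    intro f w h
    cases f with
    | zero => rfl
    | succ f =>
      rcases redWordAux_cases N f w with h1 | ⟨i, j, hij, hlt, h1⟩
      · exact h1.2
      · have := len_desc w i j hij hlt; omega
  induction f generalizing f' w with
  | zero => rw [z 0 w (by omega), z f' w (by omega)]
  | succ f ih =>
    cases f' with
    | zero => rw [z 0 w (by omega), z _ w (by omega)]
    | succ f' =>
      rcases redWordAux_cases N f w with h1 | ⟨i, j, hij, hlt, h1⟩
      · rcases redWordAux_cases N f' w with h2 | ⟨i, j, hij, hlt, h2⟩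
        · rw [h1.2, h2.2]
        · rw [h1.1] at hlt; simp at hlt; omega
      · have := len_desc w i j hij hlt
        rw [h1, h1, ih f' _ (by omega) (by omega)]

/-- the operator `∂_v` -/
noncomputable def G {N : ℕ} [NeZero N] (v : Equiv.Perm (Fin N)) (f : MvPolynomial (Fin N) ℤ) :
    MvPolynomial (Fin N) ℤ := divDiffWord (redWord N v) f

lemma G_one {N : ℕ} [NeZero N] (f : MvPolynomial (Fin N) ℤ) : G (1 : Perm (Fin N)) f = f := by
  have : len (1 : Perm (Fin N)) = 0 := by
    rw [len, Finset.card_eq_zero, Finset.filter_eq_empty_iff]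
    rintro p _ ⟨h1, h2⟩
    simp at h2; omega
  rw [G, redWord, redWordAux_fuel N _ 0 _ (len_le _) this.le]
  rfl

lemma G_some {N : ℕ} [NeZero N] (v : Equiv.Perm (Fin N)) (hv : v ≠ 1) :
    ∃ i j : Fin N, (j : ℕ) = i + 1 ∧ v j < v i ∧ ∀ f, G v f = G (v * swap i j) (del i j f) := by
  rcases redWordAux_cases N (N * N) v with h1 | ⟨i, j, hij, hlt, h1⟩
  · exact absurd h1.1 hv
  · refine ⟨i, j, hij, hlt, fun f => ?_⟩
    rw [G, redWord, redWordAux_fuel N _ (N * N + 1) _ (len_le _) ((len_le _).trans (by omega)), h1,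
      divDiffWord, List.foldr_append, List.foldr_cons, List.foldr_nil, divDiff_eq, pos_succ, ← hij,
      pos_succ, G, redWord, divDiffWord]

lemma swap3 {N : ℕ} (i j k : Fin N) (hij : i ≠ j) (hjk : j ≠ k) (hik : i ≠ k) :
    swap i j * swap j k * swap i j = swap j k * swap i j * swap j k := by
  ext x
  simp only [Perm.mul_apply]
  by_cases hi : x = i
  · subst hi
    simp [swap_apply_of_ne_of_ne hij hik, swap_apply_of_ne_of_ne hik.symm hjk.symm]
  by_cases hj : x = j
  · subst hj
    simp [swap_apply_of_ne_of_ne hij hik, swap_apply_of_ne_of_ne hik.symm hjk.symm]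
  by_cases hk : x = k
  · subst hk
    simp [swap_apply_of_ne_of_ne hij hik, swap_apply_of_ne_of_ne hik.symm hjk.symm]
  simp [swap_apply_of_ne_of_ne hi hj, swap_apply_of_ne_of_ne hj hk]

lemma G_desc_aux {N : ℕ} [NeZero N] (n : ℕ) : ∀ (v : Equiv.Perm (Fin N)), len v ≤ n →
    ∀ i j : Fin N, (j : ℕ) = i + 1 → v j < v i → ∀ f, G v f = G (v * swap i j) (del i j f) := by
  induction n with
  | zero =>
    intro v hv i j hij hlt
    have := len_desc v i j hij hlt; omega
  | succ n ih =>
    have key : ∀ (v : Equiv.Perm (Fin N)), len v ≤ n + 1 → ∀ i j k : Fin N, (j : ℕ) = i + 1 →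
        (k : ℕ) = j + 1 → v j < v i → v k < v j →
        ∀ f, G (v * swap i j) (del i j f) = G (v * swap j k) (del j k f) := by
      intro v hv i j k hij hjk h1 h2 f
      have nij : i ≠ j := by intro h; subst h; omega
      have njk : j ≠ k := by intro h; subst h; omega
      have nik : i ≠ k := by intro h; subst h; omega
      have l1 := len_desc v i j hij h1
      have l2 := len_desc v j k hjk h2
      have o1 : swap i j k = k := swap_apply_of_ne_of_ne nik.symm njk.symm
      have o2 : swap j k i = i := swap_apply_of_ne_of_ne nij nik
      have g1 : (v * swap i j) k < (v * swap i j) j := by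
        simp only [Perm.mul_apply, o1, swap_apply_right]; exact h2.trans h1
      have g2 : (v * swap j k) j < (v * swap j k) i := by
        simp only [Perm.mul_apply, o2, swap_apply_left]; exact h2.trans h1
      have l3 := len_desc _ j k hjk g1
      have l4 := len_desc _ i j hij g2
      rw [ih _ (by omega) j k hjk g1, ih _ (by omega) i j hij g2]
      rw [ih (v * swap i j * swap j k) (by omega) i j hij (by simpa [o1, o2] using h2),
        ih (v * swap j k * swap i j) (by omega) j k hjk (by simpa [o1, o2] using h1), del_braid i j k nij njk nik]
      congr 1
      simp only [mul_assoc]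
      congr 1
      have := swap3 i j k nij njk nik
      simpa only [mul_assoc] using this
    intro v hv i j hij hlt f
    have hne : v ≠ 1 := by
      rintro rfl; simp at hlt; omega
    obtain ⟨a, b, hab, hlt', hG⟩ := G_some v hne
    rw [hG f]
    by_cases h1 : a = i
    · have : b = j := by ext; rw [hab, hij, h1]
      rw [h1, this]
    by_cases h2 : a = j
    · subst h2
      rw [key v hv i a b hij hab hlt hlt' f]
    by_cases h3 : b = i
    · subst h3
      rw [key v hv a b j hab hij hlt' hlt f]
    have h4 : b ≠ j := by intro h; subst h; apply h1; ext; omega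
    have nij : i ≠ j := by intro h; subst h; omega
    have nab : a ≠ b := by intro h; subst h; omega
    have l1 := len_desc v i j hij hlt
    have l2 := len_desc v a b hab hlt'
    rw [ih (v * swap a b) (by omega) i j hij (by
        simp only [Perm.mul_apply, swap_apply_of_ne_of_ne (Ne.symm h1) (Ne.symm h3),
          swap_apply_of_ne_of_ne (Ne.symm h2) (Ne.symm h4)]; exact hlt),
      ih (v * swap i j) (by omega) a b hab (by
        simp only [Perm.mul_apply, swap_apply_of_ne_of_ne h1 h2,
          swap_apply_of_ne_of_ne h3 h4]; exact hlt'),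
      del_comm i j a b nij nab (Ne.symm h1) (Ne.symm h3) (Ne.symm h2) (Ne.symm h4)]
    congr 1
    rw [mul_assoc, mul_assoc]
    congr 1
    refine Equiv.Perm.Disjoint.commute ?_
    intro x
    by_cases hi : x = a
    · subst hi; right; exact swap_apply_of_ne_of_ne h1 h2
    by_cases hj : x = b
    · subst hj; right; exact swap_apply_of_ne_of_ne h3 h4
    left; exact swap_apply_of_ne_of_ne hi hj

lemma G_desc {N : ℕ} [NeZero N] (v : Equiv.Perm (Fin N)) (i j : Fin N) (hij : (j : ℕ) = i + 1)
    (hlt : v j < v i) (f) : G v f = G (v * swap i j) (del i j f) :=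
  G_desc_aux _ v le_rfl i j hij hlt f

lemma del_G_aux {N : ℕ} [NeZero N] (i j : Fin N) (hij : (j : ℕ) = i + 1) (n : ℕ) :
    ∀ (v : Equiv.Perm (Fin N)), len v ≤ n → v.symm i < v.symm j →
    ∀ f, del i j (G v f) = G (swap i j * v) f := by
  induction n with
  | zero =>
    intro v hv h f
    have hv1 : v = 1 := by
      by_contra hc
      obtain ⟨a, b, hab, hlt⟩ := exists_desc v hc
      have := len_desc v a b hab hlt; omega
    subst hv1
    rw [G_one, G_desc (swap i j * 1) i j hij (by simp; omega)]
    simp [G_one]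
  | succ n ih =>
    intro v hv h f
    by_cases hv1 : v = 1
    · subst hv1
      rw [G_one, G_desc (swap i j * 1) i j hij (by simp; omega)]
      simp [G_one]
    obtain ⟨a, b, hab, hlt⟩ := exists_desc v hv1
    have hne : ¬ (v a = j ∧ v b = i) := by
      rintro ⟨h1, h2⟩
      rw [← h1, ← h2] at h
      simp at h; omega
    have l := len_desc v a b hab hlt
    rw [G_desc v a b hab hlt, ih (v * swap a b) (by omega), G_desc (swap i j * v) a b hab, mul_assoc]
    · rw [Perm.mul_apply, Perm.mul_apply, Fin.lt_def, swap_apply_def, swap_apply_def]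
      have e1 : ∀ x : Fin N, v x = i ↔ (v x : ℕ) = i := fun x => Fin.ext_iff
      have e2 : ∀ x : Fin N, v x = j ↔ (v x : ℕ) = j := fun x => Fin.ext_iff
      simp only [e1, e2] at *
      split_ifs <;> omega
    · have : ∀ x, (v * swap a b).symm x = swap a b (v.symm x) := by
        intro x; rfl
      rw [this, this, Fin.lt_def, swap_apply_def, swap_apply_def]
      have e1 : v.symm i = a ↔ ((v.symm i : Fin N) : ℕ) = a := Fin.ext_iff
      have e2 : v.symm i = b ↔ ((v.symm i : Fin N) : ℕ) = b := Fin.ext_iff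
      have e3 : v.symm j = a ↔ ((v.symm j : Fin N) : ℕ) = a := Fin.ext_iff
      have e4 : v.symm j = b ↔ ((v.symm j : Fin N) : ℕ) = b := Fin.ext_iff
      have hne' : ¬ (v.symm j = a ∧ v.symm i = b) := by
        rintro ⟨h1, h2⟩
        rw [h1, h2] at h; omega
      have hne'' : ¬ (v.symm i = a ∧ v.symm j = b) := by
        rintro ⟨h1, h2⟩
        rw [← h1, ← h2] at hlt; simp at hlt; omega
      rw [e3, e2] at hne'
      rw [e1, e4] at hne''
      simp only [e1, e2, e3, e4]
      split_ifs <;> omega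

lemma del_G {N : ℕ} [NeZero N] (i j : Fin N) (hij : (j : ℕ) = i + 1) (v : Equiv.Perm (Fin N)) (f) :
    del i j (G v f) = if v.symm i < v.symm j then G (swap i j * v) f else 0 := by
  have nij : i ≠ j := by intro h; subst h; omega
  split_ifs with h
  · exact del_G_aux i j hij _ v le_rfl h f
  · have := del_G_aux i j hij _ (swap i j * v) le_rfl (by
      have : ∀ x, (swap i j * v).symm x = v.symm (swap i j x) := by intro x; rfl
      rw [this, this, swap_apply_left, swap_apply_right]
      have : v.symm i ≠ v.symm j := v.symm.injective.ne nij
      omega) f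
    rw [← mul_assoc, swap_mul_self, one_mul] at this
    rw [← this, del_del i j nij]

lemma del_schub {N : ℕ} [NeZero N] (i j : Fin N) (hij : (j : ℕ) = i + 1) (w : Equiv.Perm (Fin N)) :
    del i j (schubertPoly N w) = if w j < w i then schubertPoly N (w * swap i j) else 0 := by
  have h := del_G i j hij (w⁻¹ * w0 N) (staircase N)
  have e : (w⁻¹ * w0 N).symm i < (w⁻¹ * w0 N).symm j ↔ w j < w i := by
    show Fin.rev (w i) < Fin.rev (w j) ↔ _
    exact Fin.rev_lt_rev
  rw [show schubertPoly N w = G (w⁻¹ * w0 N) (staircase N) from rfl, h]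
  simp only [e]
  have : swap i j * (w⁻¹ * w0 N) = (w * swap i j)⁻¹ * w0 N := by
    rw [mul_inv_rev, swap_inv, mul_assoc]
  rw [this]; rfl

lemma schub_w0 {N : ℕ} [NeZero N] : schubertPoly N (w0 N) = staircase N := by
  rw [show schubertPoly N (w0 N) = G ((w0 N)⁻¹ * w0 N) (staircase N) from rfl, inv_mul_cancel, G_one]

/-- exponents of the chain from the staircase to `1` -/
def eC (N r s i : ℕ) : ℕ := if i < s then N - 2 - r - i else N - 1 - r - i

/-- permutations of the chain from `w0` to `1` -/
def wC (N r s i : ℕ) : ℕ :=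
  if i < s then N - 2 - r - i else if i = s then N - 1 - r else if i ≤ N - 1 - r then N - 1 - r - i else i

/-- chain statement -/
def PC (N r s : ℕ) [NeZero N] : Prop :=
  ∃ w : Perm (Fin N), schubertPoly N w = ∏ i : Fin N, X i ^ eC N r s i ∧
    ∀ i : Fin N, (w i : ℕ) = wC N r s i

lemma PC_zero (N : ℕ) [NeZero N] : PC N 0 0 := by
  refine ⟨w0 N, ?_, ?_⟩
  · rw [schub_w0, staircase]
    apply Finset.prod_congr rfl
    intro i _
    simp [eC]
  · intro i
    show (Fin.rev i : ℕ) = _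
    rw [Fin.val_rev, wC]
    split_ifs <;> omega

lemma PC_step (N r s : ℕ) [NeZero N] (hs : s < N - 1 - r) (h : PC N r s) : PC N r (s + 1) := by
  obtain ⟨w, h1, h2⟩ := h
  obtain ⟨i, hi⟩ : ∃ i : Fin N, (i : ℕ) = s := ⟨⟨s, by omega⟩, rfl⟩
  obtain ⟨j, hj⟩ : ∃ j : Fin N, (j : ℕ) = s + 1 := ⟨⟨s + 1, by omega⟩, rfl⟩
  have hij : (j : ℕ) = i + 1 := by omega
  have nij : i ≠ j := by intro h; subst h; omega
  refine ⟨w * swap i j, ?_, ?_⟩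
  · have h3 := del_schub i j hij w
    rw [if_pos (by rw [Fin.lt_def, h2, h2, wC, wC]; split_ifs <;> omega)] at h3
    rw [← h3, h1]
    have e : (∏ i : Fin N, X i ^ eC N r s i : MvPolynomial (Fin N) ℤ) =
        X i * ∏ i : Fin N, X i ^ eC N r (s + 1) i := by
      rw [← Finset.mul_prod_erase _ _ (Finset.mem_univ i),
        ← Finset.mul_prod_erase _ (fun l : Fin N => (X l ^ eC N r (s + 1) l : MvPolynomial (Fin N) ℤ))
          (Finset.mem_univ i), ← mul_assoc, ← pow_succ']
      congr 1
      · congr 1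
        rw [eC, eC]; split_ifs <;> omega
      · apply Finset.prod_congr rfl
        intro l hl
        have : (l : ℕ) ≠ s := by
          intro h'
          exact (Finset.ne_of_mem_erase hl) (Fin.ext (by omega))
        congr 1
        rw [eC, eC]; split_ifs <;> omega
    rw [e, del_X_i i j nij, del_sym i j nij, mul_zero, add_zero]
    rw [map_prod]
    simp only [map_pow, rename_X]
    rw [← Equiv.prod_comp (swap i j)]
    apply Finset.prod_congr rfl
    intro l _
    have : swap i j (swap i j l) = l := by rw [← Perm.mul_apply, swap_mul_self, Perm.one_apply]
    rw [this]
    congr 1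
    by_cases hli : l = i
    · subst hli; rw [swap_apply_left, eC, eC]; split_ifs <;> omega
    by_cases hlj : l = j
    · subst hlj; rw [swap_apply_right, eC, eC]; split_ifs <;> omega
    rw [swap_apply_of_ne_of_ne hli hlj]
  · intro l
    rw [Perm.mul_apply]
    by_cases hli : l = i
    · subst hli; rw [swap_apply_left, h2, wC, wC]; split_ifs <;> omega
    by_cases hlj : l = j
    · subst hlj; rw [swap_apply_right, h2, wC, wC]; split_ifs <;> omega
    rw [swap_apply_of_ne_of_ne hli hlj, h2]
    have : (l : ℕ) ≠ s := fun h' => hli (Fin.ext (by omega))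
    have : (l : ℕ) ≠ s + 1 := fun h' => hlj (Fin.ext (by omega))
    rw [wC, wC]; split_ifs <;> omega

lemma PC_turn (N r : ℕ) [NeZero N] (hr : r < N - 1) (h : PC N r (N - 1 - r)) : PC N (r + 1) 0 := by
  obtain ⟨w, h1, h2⟩ := h
  refine ⟨w, ?_, ?_⟩
  · rw [h1]
    apply Finset.prod_congr rfl
    intro i _
    congr 1
    rw [eC, eC]; split_ifs <;> omega
  · intro i
    rw [h2, wC, wC]; split_ifs <;> omega

lemma PC_all (N r : ℕ) [NeZero N] (hr : r ≤ N - 1) : PC N r 0 := by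
  induction r with
  | zero => exact PC_zero N
  | succ r ih =>
    apply PC_turn N r (by omega)
    have : ∀ s, s ≤ N - 1 - r → PC N r s := by
      intro s
      induction s with
      | zero => intro _; exact ih (by omega)
      | succ s ihs => intro hs; exact PC_step N r s (by omega) (ihs (by omega))
    exact this _ le_rfl

lemma schub_one {N : ℕ} [NeZero N] : schubertPoly N 1 = 1 := by
  obtain ⟨w, h1, h2⟩ := PC_all N (N - 1) le_rfl
  have hN : N ≠ 0 := NeZero.ne N
  have : w = 1 := by
    ext i
    rw [h2, wC, Perm.one_apply]; split_ifs <;> omega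
  rw [← this, h1]
  apply Finset.prod_eq_one
  intro i _
  have : eC N (N - 1) 0 i = 0 := by rw [eC]; split_ifs <;> omega
  rw [this, pow_zero]

/-- class of the variable -/
noncomputable def xi {N : ℕ} (i : Fin N) : HRing N := Ideal.Quotient.mk (symIdeal N) (X i)

lemma prod_T {N : ℕ} : (∏ i : Fin N, (Polynomial.X - Polynomial.C (xi i)) : Polynomial (HRing N)) =
    Polynomial.X ^ N := by
  set P : Polynomial (MvPolynomial (Fin N) ℤ) := ∏ i : Fin N, (Polynomial.X - Polynomial.C (X i)) with hP
  have e : (∏ i : Fin N, (Polynomial.X - Polynomial.C (xi i)) : Polynomial (HRing N)) =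
      P.map (Ideal.Quotient.mk (symIdeal N)) := by
    rw [hP, Polynomial.map_prod]
    apply Finset.prod_congr rfl
    intro i _
    rw [Polynomial.map_sub, Polynomial.map_X, Polynomial.map_C]; rfl
  have hmon : P.Monic := Polynomial.monic_prod_of_monic _ _ (fun i _ => Polynomial.monic_X_sub_C _)
  have hdeg : P.natDegree = N := by
    rw [hP, Polynomial.natDegree_prod_of_monic _ _ (fun i _ => Polynomial.monic_X_sub_C _)]
    simp
  have hsym : ∀ d, (P.coeff d).IsSymmetric := by
    intro d σ
    have : P.map (rename σ : MvPolynomial (Fin N) ℤ →ₐ[ℤ] _).toRingHom = P := by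
      rw [hP, Polynomial.map_prod]
      rw [← Equiv.prod_comp σ (fun i => (Polynomial.X - Polynomial.C (X i : MvPolynomial (Fin N) ℤ)))]
      apply Finset.prod_congr rfl
      intro i _
      rw [Polynomial.map_sub, Polynomial.map_X, Polynomial.map_C]; simp
    have := congrArg (fun p => p.coeff d) this
    simpa [Polynomial.coeff_map] using this
  have hcc : ∀ d, constantCoeff (P.coeff d) = if d = N then 1 else 0 := by
    intro d
    have : P.map (constantCoeff : MvPolynomial (Fin N) ℤ →+* ℤ) = Polynomial.X ^ N := by
      rw [hP, Polynomial.map_prod]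
      simp
    have := congrArg (fun p => p.coeff d) this
    simpa [Polynomial.coeff_map, Polynomial.coeff_X_pow] using this
  rw [e]
  ext d
  rw [Polynomial.coeff_map, Polynomial.coeff_X_pow]
  split_ifs with h
  · subst h
    have := hmon.coeff_natDegree
    rw [hdeg] at this
    rw [this, map_one]
  · rw [Ideal.Quotient.eq_zero_iff_mem]
    apply Ideal.subset_span
    refine ⟨hsym d, ?_⟩
    rw [hcc, if_neg h]

lemma prod_kill {N : ℕ} {H : Type*} [CommRing H] (xi : Fin N → H) (M : H) (s : Finset (Fin N)) (h : ∀ i ∈ s, M * xi i = 0) :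
    Polynomial.C M * ∏ i ∈ s, (Polynomial.X - Polynomial.C (xi i)) =
      Polynomial.C M * Polynomial.X ^ s.card := by
  induction s using Finset.induction_on with
  | empty => simp
  | insert a s ha ih =>
    rw [Finset.prod_insert ha, Finset.card_insert_of_notMem ha, mul_left_comm,
      ih (fun i hi => h i (Finset.mem_insert_of_mem hi)), pow_succ]
    have := congrArg Polynomial.C (h a (Finset.mem_insert_self a s))
    rw [map_mul, map_zero] at this
    linear_combination (- Polynomial.X ^ s.card) * this

lemma prod_Iic' {N : ℕ} {H : Type*} [CommRing H] (J : Fin N) (f : Fin N → H) :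
    ∏ i ∈ Finset.Iic J, f i = f J * ∏ i ∈ Finset.Iio J, f i := by
  rw [← Finset.Iio_insert, Finset.prod_insert (by simp)]

lemma stair_kill {N : ℕ} {H : Type*} [CommRing H] (xi : Fin N → H)
    (h2 : (∏ i : Fin N, (Polynomial.X - Polynomial.C (xi i)) : Polynomial H) = Polynomial.X ^ N)
    (J : Fin N) :
    (∏ i ∈ Finset.Iio J, xi i ^ (N - 1 - (i : ℕ))) * xi J ^ (N - (J : ℕ)) = 0 := by
  induction hn : (J : ℕ) using Nat.strong_induction_on generalizing J with
  | _ n ih =>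
  subst hn
  set M := ∏ i ∈ Finset.Iio J, xi i ^ (N - 1 - (i : ℕ)) with hM
  have hk : ∀ i ∈ Finset.Iio J, M * xi i = 0 := by
    intro i hi
    rw [Finset.mem_Iio] at hi
    have h1 := ih i hi i rfl
    have h2 : ∏ l ∈ Finset.Iic i, xi l ^ (N - 1 - (l : ℕ)) ∣ M :=
      Finset.prod_dvd_prod_of_subset _ _ _ (by
        intro x hx; rw [Finset.mem_Iic] at hx; rw [Finset.mem_Iio]; exact lt_of_le_of_lt hx hi)
    obtain ⟨c, hc⟩ := h2
    rw [hc, prod_Iic']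
    have : N - (i : ℕ) = (N - 1 - (i : ℕ)) + 1 := by omega
    rw [this, pow_succ] at h1
    linear_combination c * h1
  have h1 := prod_kill xi M _ hk
  have h3 : (∏ i : Fin N, (Polynomial.X - Polynomial.C (xi i)) : Polynomial (H)) =
      (∏ i ∈ Finset.Iio J, (Polynomial.X - Polynomial.C (xi i))) *
        ∏ i ∈ Finset.Ici J, (Polynomial.X - Polynomial.C (xi i)) := by
    rw [← Finset.prod_union]
    · apply Finset.prod_congr _ (fun _ _ => rfl)
      ext x; simp [lt_or_ge]
    · rw [Finset.disjoint_left]; intro x; simp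
  rw [h3] at h2
  rw [Fin.card_Iio] at h1
  have h4 : Polynomial.X ^ (J : ℕ) * (Polynomial.C M * ∏ i ∈ Finset.Ici J, (Polynomial.X - Polynomial.C (xi i))) =
      Polynomial.X ^ (J : ℕ) * (Polynomial.C M * Polynomial.X ^ (N - (J : ℕ))) := by
    have : Polynomial.X ^ (J : ℕ) * (Polynomial.C M * Polynomial.X ^ (N - (J : ℕ))) =
      Polynomial.C M * (Polynomial.X : Polynomial (H)) ^ N := by
      rw [mul_left_comm, ← pow_add]; congr 2; omega
    rw [this, ← h2]
    linear_combination (-∏ i ∈ Finset.Ici J, (Polynomial.X - Polynomial.C (xi i))) * h1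
  have h5 := (Polynomial.monic_X_pow (R := H) (J : ℕ)).isRegular.left h4
  have h6 := congrArg (Polynomial.eval (xi J)) h5
  rw [Polynomial.eval_mul, Polynomial.eval_mul, Polynomial.eval_prod,
    Finset.prod_eq_zero (i := J) (by simp) (by simp)] at h6
  simpa using h6.symm

lemma X_stair {N : ℕ} (J : Fin N) : X J * staircase N ∈ symIdeal N := by
  rw [← Ideal.Quotient.eq_zero_iff_mem, map_mul, staircase, map_prod]
  simp only [map_pow]
  change xi J * ∏ i : Fin N, xi i ^ (N - 1 - (i : ℕ)) = 0
  have h1 := stair_kill xi prod_T J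
  have h2 : ∏ l ∈ Finset.Iic J, xi l ^ (N - 1 - (l : ℕ)) ∣ ∏ i : Fin N, xi i ^ (N - 1 - (i : ℕ)) :=
      Finset.prod_dvd_prod_of_subset _ _ _ (Finset.subset_univ _)
  obtain ⟨c, hc⟩ := h2
  rw [hc, prod_Iic']
  have : N - (J : ℕ) = (N - 1 - (J : ℕ)) + 1 := by omega
  rw [this, pow_succ] at h1
  linear_combination c * h1

/-- linear extension of Schubert polynomials -/
noncomputable def phiP (N : ℕ) [NeZero N] : VV N →ₗ[ℤ] MvPolynomial (Fin N) ℤ :=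
  Finsupp.linearCombination ℤ (schubertPoly N)

lemma phiP_bv {N : ℕ} [NeZero N] (w : Perm (Fin N)) : phiP N (bv w) = schubertPoly N w := by
  simp [phiP, bv]

lemma del_phiP {N : ℕ} [NeZero N] (i j : Fin N) (hij : (j : ℕ) = i + 1) (v : VV N) :
    del i j (phiP N v) = phiP N (dd i j v) := by
  have nij : i ≠ j := by intro h; subst h; omega
  have : (delA i j nij).comp (phiP N) = (phiP N).comp (dd i j) := by
    apply end_ext
    intro w
    rw [LinearMap.comp_apply, LinearMap.comp_apply, phiP_bv, dd_bv, delA_apply, del_schub i j hij]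
    split_ifs
    · rw [phiP_bv]
    · rw [map_zero]
  exact congrArg (fun f => f v) this

lemma XX_w0 {N : ℕ} (l : Fin N) : XX l (bv (w0 N)) = 0 := by
  have : ∀ a b : Fin N, op a b (bv (w0 N)) = 0 := by
    intro a b
    rw [op_bv, if_neg]
    rintro ⟨h1, h2, _⟩
    have : Fin.rev a < Fin.rev b := h2
    rw [Fin.rev_lt_rev] at this
    omega
  rw [XX, LinearMap.sum_apply]
  simp [this]

lemma monk {N : ℕ} [NeZero N] (n : ℕ) : ∀ (w : Perm (Fin N)), N * N ≤ n + len w → ∀ l : Fin N,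
    X l * schubertPoly N w - phiP N (XX l (bv w)) ∈ symIdeal N := by
  have base : ∀ l : Fin N, X l * schubertPoly N (w0 N) - phiP N (XX l (bv (w0 N))) ∈ symIdeal N := by
    intro l
    rw [XX_w0, map_zero, sub_zero, schub_w0]
    exact X_stair l
  have asc : ∀ w : Perm (Fin N), w ≠ w0 N → ∃ i j : Fin N, (j : ℕ) = i + 1 ∧ w i < w j := by
    intro w hw
    have : w0 N * w ≠ 1 := by
      intro h
      apply hw
      rw [← mul_right_inj (w0 N), h]
      ext x
      show (x : ℕ) = (Fin.rev (Fin.rev x) : Fin N)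
      rw [Fin.rev_rev]
    obtain ⟨i, j, hij, h⟩ := exists_desc _ this
    refine ⟨i, j, hij, ?_⟩
    have : Fin.rev (w j) < Fin.rev (w i) := h
    rwa [Fin.rev_lt_rev] at this
  induction n with
  | zero =>
    intro w hw
    by_cases h : w = w0 N
    · rw [h]; exact base
    · obtain ⟨i, j, hij, h⟩ := asc w h
      have l1 := len_desc (w * swap i j) i j hij (by simpa using h)
      rw [mul_assoc, swap_mul_self, mul_one] at l1
      have := len_le (w * swap i j)
      omega
  | succ n ih =>
    intro w hw l
    by_cases h : w = w0 N
    · rw [h]; exact base l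
    obtain ⟨i, j, hij, h⟩ := asc w h
    have nij : i ≠ j := by intro h; subst h; omega
    have l1 := len_desc (w * swap i j) i j hij (by simpa using h)
    rw [mul_assoc, swap_mul_self, mul_one] at l1
    have dbv : dd i j (bv (w * swap i j)) = bv w := by
      rw [dd_bv, if_pos (by simpa using h), mul_assoc, swap_mul_self, mul_one]
    have dS : del i j (schubertPoly N (w * swap i j)) = schubertPoly N w := by
      rw [del_schub i j hij, if_pos (by simpa using h), mul_assoc, swap_mul_self, mul_one]
    have H := fun l => del_mem i j nij _ (ih (w * swap i j) (by omega) l)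
    by_cases hi : l = i
    · have := H j
      rw [del_sub i j nij, del_X_j i j nij, del_phiP i j hij, dd_XX_j i j hij, dbv, dS, map_sub,
        phiP_bv] at this
      rw [hi]
      convert this using 1; ring
    by_cases hj : l = j
    · have := H i
      rw [del_sub i j nij, del_X_i i j nij, del_phiP i j hij, dd_XX_i i j hij, dbv, dS, map_add,
        phiP_bv] at this
      rw [hj]
      convert this using 1; ring
    · have := H l
      rw [del_sub i j nij, del_X_other i j l nij hi hj, del_phiP i j hij,
        dd_XX_other i j l hij hi hj, dbv, dS] at this
      exact this

/-- linear extension of Schubert classes -/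
noncomputable def phi (N : ℕ) [NeZero N] : VV N →ₗ[ℤ] HRing N :=
  Finsupp.linearCombination ℤ (SS N)

lemma phi_bv {N : ℕ} [NeZero N] (w : Perm (Fin N)) : phi N (bv w) = SS N w := by
  simp [phi, bv]

lemma phi_eq {N : ℕ} [NeZero N] (v : VV N) : phi N v = Ideal.Quotient.mk (symIdeal N) (phiP N v) := by
  have : phi N = (Ideal.Quotient.mk (symIdeal N)).toAddMonoidHom.toIntLinearMap.comp (phiP N) := by
    apply end_ext
    intro w
    rw [LinearMap.comp_apply, phi_bv, phiP_bv]; rfl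
  rw [this]; rfl

lemma phi_XX {N : ℕ} [NeZero N] (l : Fin N) (v : VV N) : phi N (XX l v) = xi l * phi N v := by
  have : (phi N).comp (XX l) = (LinearMap.mulLeft ℤ (xi l)).comp (phi N) := by
    apply end_ext
    intro w
    rw [LinearMap.comp_apply, LinearMap.comp_apply, LinearMap.mulLeft_apply, phi_bv, phi_eq, SS, xi,
      ← map_mul]
    symm
    rw [Ideal.Quotient.eq]
    exact monk (N * N) w (by omega) l
  exact congrArg (fun f => f v) this

/-- `T` acts as multiplication by `r` -/
def InB {N : ℕ} [NeZero N] (T : Module.End ℤ (VV N)) (r : HRing N) : Prop :=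
  ∀ v, phi N (T v) = r * phi N v

section
variable {N : ℕ} [NeZero N] {T T' : Module.End ℤ (VV N)} {r r' : HRing N}

lemma InB.mul (h : InB T r) (h' : InB T' r') : InB (T * T') (r * r') := by
  intro v
  rw [Module.End.mul_apply, h, h', mul_assoc]

lemma InB.add (h : InB T r) (h' : InB T' r') : InB (T + T') (r + r') := by
  intro v
  rw [LinearMap.add_apply, map_add, h, h', add_mul]

lemma InB.sub (h : InB T r) (h' : InB T' r') : InB (T - T') (r - r') := by
  intro v
  rw [LinearMap.sub_apply, map_sub, h, h', sub_mul]

lemma InB.one : InB (1 : Module.End ℤ (VV N)) 1 := by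
  intro v
  rw [Module.End.one_apply, one_mul]

lemma InB.zero : InB (0 : Module.End ℤ (VV N)) 0 := by
  intro v
  rw [LinearMap.zero_apply, map_zero, zero_mul]

end

lemma InB_Dn {N : ℕ} [NeZero N] (k : ℕ) (hk : k ≤ N) (m : ℕ) :
    ∃ r, InB (Dn (AA (N := N) k) N m) r := by
  induction k generalizing m with
  | zero =>
    cases m with
    | zero => rw [Dn_zero]; exact ⟨1, InB.one⟩
    | succ m =>
      refine ⟨0, ?_⟩
      have : Dn (AA (N := N) 0) N (m + 1) = 0 := by
        rw [Dn_succ]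
        apply Finset.sum_eq_zero
        intro a _
        rw [AA_zero, mul_zero]; split_ifs <;> rfl
      rw [this]; exact InB.zero
  | succ k ih =>
    cases m with
    | zero => rw [Dn_zero]; exact ⟨1, InB.one⟩
    | succ m =>
      have e := Dn_full (⟨k, by omega⟩ : Fin N) m
      simp only at e
      rw [e]
      obtain ⟨r1, h1⟩ := ih (by omega) (m + 1)
      obtain ⟨r2, h2⟩ := ih (by omega) m
      exact ⟨_, h1.add (h2.mul (r' := xi ⟨k, by omega⟩) (phi_XX _))⟩

lemma mul_lt {N : ℕ} (k p q : ℕ) (hp : 1 ≤ p) (hq : 1 ≤ q) :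
    Fw (AA (N := N) k) (fun x y => y < x) q * Fw (AA (N := N) k) (fun x y => x < y) p =
      Kw (AA (N := N) k) (fun x y => x < y) (p + q) p +
      Kw (AA (N := N) k) (fun x y => x < y) (p + q) (p + 1) :=
  Fw_mul (AA (N := N) k) (AA_sq k) (fun x y => x < y) (fun x => lt_irrefl x)
    (fun _ _ _ => lt_trans) (fun x y => lt_trichotomy x y) p q hp hq

lemma mul_gt {N : ℕ} (k p q : ℕ) (hp : 1 ≤ p) (hq : 1 ≤ q) :
    Fw (AA (N := N) k) (fun x y => x < y) q * Fw (AA (N := N) k) (fun x y => y < x) p =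
      Kw (AA (N := N) k) (fun x y => y < x) (p + q) p +
      Kw (AA (N := N) k) (fun x y => y < x) (p + q) (p + 1) :=
  Fw_mul (AA (N := N) k) (AA_sq k) (fun x y => y < x) (fun x => lt_irrefl x)
    (fun _ _ _ h h' => lt_trans h' h) (fun x y => by
      rcases lt_trichotomy x y with h | h | h
      · exact Or.inr (Or.inr h)
      · exact Or.inr (Or.inl h)
      · exact Or.inl h) p q hp hq

lemma InB_Fw {N : ℕ} [NeZero N] (k : ℕ) (hk : k ≤ N) (m : ℕ) :
    ∃ r, InB (Fw (AA (N := N) k) (fun x y => x < y) m) r := by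
  induction m using Nat.strong_induction_on with
  | _ m ih =>
  by_cases hm : m = 0
  · subst hm; rw [Fw_zero]; exact ⟨1, InB.one⟩
  have key : ∀ d j, 1 ≤ j → j + d = m →
      ∃ r, InB (Kw (AA (N := N) k) (fun x y => y < x) m j) r := by
    intro d
    induction d with
    | zero =>
      intro j hj hjd
      obtain rfl : j = m := by omega
      rw [Kw_self, Fw_gt]
      exact InB_Dn k hk _
    | succ d ihd =>
      intro j hj hjd
      obtain ⟨r1, h1⟩ := ihd (j + 1) (by omega) (by omega)
      obtain ⟨r2, h2⟩ := ih (d + 1) (by omega)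
      obtain ⟨r3, h3⟩ := InB_Dn (N := N) k hk j
      rw [← Fw_gt] at h3
      have e := mul_gt (N := N) k j (d + 1) hj (by omega)
      rw [hjd] at e
      rw [← sub_eq_iff_eq_add] at e
      rw [← e]
      exact ⟨_, (h2.mul h3).sub h1⟩
  have := key (m - 1) 1 le_rfl (by omega)
  rwa [Kw_one] at this

lemma InB_hook {N : ℕ} [NeZero N] (k : ℕ) (hk : k ≤ N) (q : ℕ) (p : ℕ) (hp : 1 ≤ p) (hq : 1 ≤ q) :
    ∃ r, InB (Kw (AA (N := N) k) (fun x y => x < y) (p + q - 1) p) r ∧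
      InB (Kw (AA (N := N) k) (fun x y => y < x) (p + q - 1) q) r := by
  induction q, hq using Nat.le_induction generalizing p with
  | base =>
    obtain ⟨r, h⟩ := InB_Fw (N := N) k hk p
    refine ⟨r, ?_, ?_⟩
    · rw [Nat.add_sub_cancel, Kw_self]; exact h
    · rw [Nat.add_sub_cancel, Kw_one]; exact h
  | succ q hq ih =>
    obtain ⟨r, h1, h2⟩ := ih (p + 1) (by omega)
    obtain ⟨ri, hi⟩ := InB_Fw (N := N) k hk p
    obtain ⟨rd, hd⟩ := InB_Dn (N := N) k hk q
    rw [← Fw_gt] at hd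
    have e1 := mul_lt (N := N) k p q hp hq
    have e2 := mul_gt (N := N) k q p hq hp
    rw [← sub_eq_iff_eq_add] at e1
    rw [← sub_eq_iff_eq_add', add_comm q p] at e2
    rw [show p + 1 + q - 1 = p + q by omega] at h1 h2
    rw [show p + (q + 1) - 1 = p + q by omega, ← e1, ← e2]
    refine ⟨rd * ri - r, (hd.mul hi).sub h1, ?_⟩
    rw [mul_comm rd ri]
    exact (hi.mul hd).sub h2

lemma AA_unique {N : ℕ} (k : ℕ) (w : Perm (Fin N)) (a0 b0 : Fin N) (ha : (a0 : ℕ) < k)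
    (hb : k ≤ (b0 : ℕ)) (hc : cov w a0 b0) (hu : ∀ a : Fin N, (a : ℕ) < k → cov w a b0 → a = a0) :
    AA k (w b0) (bv w) = bv (w * swap a0 b0) := by
  rw [AA_bv, symm_apply_apply, if_pos hb, Finset.sum_eq_single a0]
  · rw [if_pos ha, op_bv, if_pos hc]
  · intro a _ hne
    split_ifs with h
    · rw [op_bv, if_neg (fun hc' => hne (hu a h hc'))]
    · rfl
  · simp

lemma AA_none {N : ℕ} (k : ℕ) (w : Perm (Fin N)) (l : Fin N)
    (h : ∀ a b : Fin N, (a : ℕ) < k → k ≤ (b : ℕ) → w b = l → ¬ cov w a b) :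
    AA k l (bv w) = 0 := by
  rw [AA_bv]
  split_ifs with hb
  · apply Finset.sum_eq_zero
    intro a _
    split_ifs with ha
    · rw [op_bv, if_neg (h a _ ha hb (apply_symm_apply _ _))]
    · rfl
  · rfl

/-- value description of the intermediate permutations -/
def IsV {N : ℕ} (k u j : ℕ) (g : Perm (Fin N)) : Prop := ∀ x : Fin N,
  ((x : ℕ) + j + 1 < k → (g x : ℕ) = x) ∧
  (k ≤ (x : ℕ) + j + 1 ∧ (x : ℕ) + 1 < k → (g x : ℕ) = x + 1) ∧
  ((x : ℕ) + 1 = k → (g x : ℕ) + 1 = k + u) ∧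
  ((x : ℕ) = k ∧ 0 < u → (g x : ℕ) + j + 1 = k) ∧
  (k < (x : ℕ) ∧ (x : ℕ) < k + u → (g x : ℕ) + 1 = x) ∧
  (k + u ≤ (x : ℕ) → (g x : ℕ) = x)

lemma IsV_one {N : ℕ} (k : ℕ) (g : Perm (Fin N)) (h : IsV k 0 0 g) : g = 1 := by
  ext x
  have := h x
  rw [Perm.one_apply]
  omega

lemma step_inc {N : ℕ} (k u : ℕ) (hk : 1 ≤ k) (hu : k + u < N) (g : Perm (Fin N))
    (hg : IsV k (u + 1) 0 g) :
    ∃ g', IsV k u 0 g' ∧ ∀ l : Fin N, (1 ≤ u → k + u - 1 < (l : ℕ)) →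
      AA k l (bv g') = if (l : ℕ) = k + u then bv g else 0 := by
  obtain ⟨a0, ha0⟩ : ∃ a : Fin N, (a : ℕ) = k - 1 := ⟨⟨k - 1, by omega⟩, rfl⟩
  obtain ⟨b0, hb0⟩ : ∃ a : Fin N, (a : ℕ) = k + u := ⟨⟨k + u, by omega⟩, rfl⟩
  have ga0 : (g a0 : ℕ) + 1 = k + u + 1 := (hg a0).2.2.1 (by omega)
  have gb0 : (g b0 : ℕ) + 1 = k + u := by
    rcases Nat.eq_zero_or_pos u with h | h
    · have := (hg b0).2.2.2.1 (by omega)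
      omega
    · have := (hg b0).2.2.2.2.1 (by omega)
      omega
  have hV : IsV k u 0 (g * swap a0 b0) := by
    intro x
    rw [Perm.mul_apply]
    by_cases h1 : x = a0
    · subst h1; rw [swap_apply_left]; clear hg
      refine ⟨fun h => ?_, fun h => ?_, fun h => ?_, fun h => ?_, fun h => ?_, fun h => ?_⟩ <;> omega
    by_cases h2 : x = b0
    · subst h2; rw [swap_apply_right]; clear hg
      refine ⟨fun h => ?_, fun h => ?_, fun h => ?_, fun h => ?_, fun h => ?_, fun h => ?_⟩ <;> omega
    rw [swap_apply_of_ne_of_ne h1 h2]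
    obtain ⟨c1, c2, c3, c4, c5, c6⟩ := hg x
    have n1 : (x : ℕ) ≠ a0 := fun h => h1 (Fin.ext h)
    have n2 : (x : ℕ) ≠ b0 := fun h => h2 (Fin.ext h)
    refine ⟨fun h => c1 h, fun h => c2 h, fun h => ?_, fun h => c4 (by omega),
      fun h => c5 (by omega), fun h => c6 (by omega)⟩
    omega
  refine ⟨g * swap a0 b0, hV, ?_⟩
  clear ga0 gb0 hg
  set w := g * swap a0 b0 with hw
  have hgw : w * swap a0 b0 = g := by rw [hw, mul_assoc, swap_mul_self, mul_one]
  have wa0 : (w a0 : ℕ) + 1 = k + u := (hV a0).2.2.1 (by omega)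
  have wb0 : (w b0 : ℕ) = k + u := by rw [(hV b0).2.2.2.2.2 (by omega), hb0]
  have wa : ∀ a : Fin N, (a : ℕ) + 1 < k → (w a : ℕ) = a := fun a h => (hV a).1 (by omega)
  have wb : ∀ b : Fin N, k ≤ (b : ℕ) → (b : ℕ) < k + u → (w b : ℕ) < k + u := by
    intro b h1 h2
    rcases Nat.eq_or_lt_of_le h1 with h | h
    · have := (hV b).2.2.2.1 (by omega)
      omega
    · have := (hV b).2.2.2.2.1 (by omega)
      omega
  have wc : ∀ b : Fin N, k + u ≤ (b : ℕ) → (w b : ℕ) = b := fun b h => (hV b).2.2.2.2.2 h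
  clear hV
  intro l hl
  split_ifs with hlb
  · have : l = w b0 := by ext; omega
    rw [this, ← hgw]
    apply AA_unique k w a0 b0 (by omega) (by omega)
    · refine ⟨by rw [Fin.lt_def]; omega, by rw [Fin.lt_def]; omega, ?_⟩
      intro c h1 h2 ⟨h3, h4⟩
      rw [Fin.lt_def] at h3 h4
      omega
    · rintro a ha ⟨h1, h2, h3⟩
      by_contra hne
      have n1 : (a : ℕ) ≠ a0 := fun h => hne (Fin.ext h)
      have v1 := wa a (by omega)
      apply h3 a0 (by rw [Fin.lt_def]; omega) (by rw [Fin.lt_def]; omega)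
      constructor <;> rw [Fin.lt_def] <;> omega
  · apply AA_none
    rintro a b ha hb hbl ⟨h1, h2, h3⟩
    have hbl' : (w b : ℕ) = l := by rw [hbl]
    have hbb : k + u < (b : ℕ) ∧ (w b : ℕ) = b := by
      rcases lt_or_ge (b : ℕ) (k + u) with h | h
      · have := wb b hb h
        omega
      · have := wc b h
        omega
    obtain ⟨e1, e2⟩ := hbb
    by_cases haa : (a : ℕ) = a0
    · apply h3 b0 (by rw [Fin.lt_def]; omega) (by rw [Fin.lt_def]; omega)
      have : a = a0 := Fin.ext haa
      subst this
      constructor <;> rw [Fin.lt_def] <;> omega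
    · have v1 := wa a (by omega)
      apply h3 a0 (by rw [Fin.lt_def]; omega) (by rw [Fin.lt_def]; omega)
      constructor <;> rw [Fin.lt_def] <;> omega

lemma step_dec {N : ℕ} (k u j : ℕ) (hk : j + 2 ≤ k) (hu1 : 1 ≤ u) (hu : k + u ≤ N) (g : Perm (Fin N))
    (hg : IsV k u (j + 1) g) :
    ∃ g', IsV k u j g' ∧ ∀ l : Fin N, (j = 0 → (l : ℕ) < k + u - 1) → (1 ≤ j → (l : ℕ) < k - j) →
      AA k l (bv g') = if (l : ℕ) = k - 1 - j then bv g else 0 := by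
  obtain ⟨a0, ha0⟩ : ∃ a : Fin N, (a : ℕ) = k - 2 - j := ⟨⟨k - 2 - j, by omega⟩, rfl⟩
  obtain ⟨b0, hb0⟩ : ∃ a : Fin N, (a : ℕ) = k := ⟨⟨k, by omega⟩, rfl⟩
  have ga0 : (g a0 : ℕ) = a0 + 1 := (hg a0).2.1 (by omega)
  have gb0 : (g b0 : ℕ) + (j + 1) + 1 = k := (hg b0).2.2.2.1 (by omega)
  have hV : IsV k u j (g * swap a0 b0) := by
    intro x
    rw [Perm.mul_apply]
    by_cases h1 : x = a0
    · subst h1; rw [swap_apply_left]; clear hg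
      refine ⟨fun h => ?_, fun h => ?_, fun h => ?_, fun h => ?_, fun h => ?_, fun h => ?_⟩ <;> omega
    by_cases h2 : x = b0
    · subst h2; rw [swap_apply_right]; clear hg
      refine ⟨fun h => ?_, fun h => ?_, fun h => ?_, fun h => ?_, fun h => ?_, fun h => ?_⟩ <;> omega
    rw [swap_apply_of_ne_of_ne h1 h2]
    obtain ⟨c1, c2, c3, c4, c5, c6⟩ := hg x
    have n1 : (x : ℕ) ≠ a0 := fun h => h1 (Fin.ext h)
    have n2 : (x : ℕ) ≠ b0 := fun h => h2 (Fin.ext h)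
    refine ⟨fun h => c1 (by omega), fun h => c2 (by omega), fun h => c3 h, fun h => ?_,
      fun h => c5 (by omega), fun h => c6 (by omega)⟩
    omega
  refine ⟨g * swap a0 b0, hV, ?_⟩
  clear ga0 gb0 hg
  set w := g * swap a0 b0 with hw
  have hgw : w * swap a0 b0 = g := by rw [hw, mul_assoc, swap_mul_self, mul_one]
  have wa0 : (w a0 : ℕ) = a0 := (hV a0).1 (by omega)
  have wb0 : (w b0 : ℕ) + j + 1 = k := (hV b0).2.2.2.1 (by omega)
  have w1 : ∀ a : Fin N, (a : ℕ) + j + 1 < k → (w a : ℕ) = a := fun a h => (hV a).1 h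
  have w2 : ∀ a : Fin N, k ≤ (a : ℕ) + j + 1 → (a : ℕ) + 1 < k → (w a : ℕ) = a + 1 :=
    fun a h h' => (hV a).2.1 ⟨h, h'⟩
  have w3 : ∀ a : Fin N, (a : ℕ) + 1 = k → (w a : ℕ) + 1 = k + u := fun a h => (hV a).2.2.1 h
  have w5 : ∀ a : Fin N, k < (a : ℕ) → (a : ℕ) < k + u → (w a : ℕ) + 1 = a :=
    fun a h h' => (hV a).2.2.2.2.1 ⟨h, h'⟩
  have w6 : ∀ a : Fin N, k + u ≤ (a : ℕ) → (w a : ℕ) = a := fun a h => (hV a).2.2.2.2.2 h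
  clear hV
  intro l hl hl'
  split_ifs with hlb
  · have : l = w b0 := by ext; omega
    rw [this, ← hgw]
    apply AA_unique k w a0 b0 (by omega) (by omega)
    · refine ⟨by rw [Fin.lt_def]; omega, by rw [Fin.lt_def]; omega, ?_⟩
      intro c h1 h2 ⟨h3, h4⟩
      rw [Fin.lt_def] at h3 h4
      omega
    · rintro a ha ⟨h1, h2, h3⟩
      by_contra hne
      have n1 : (a : ℕ) ≠ a0 := fun h => hne (Fin.ext h)
      have hlt : (w a : ℕ) < w b0 := h2
      have v1 : (a : ℕ) + j + 1 < k ∧ (w a : ℕ) = a := by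
        rcases lt_or_ge ((a : ℕ) + j + 1) k with h | h
        · exact ⟨h, w1 a h⟩
        · rcases lt_or_ge ((a : ℕ) + 1) k with h' | h'
          · have := w2 a h h'
            omega
          · have := w3 a (by omega)
            omega
      obtain ⟨e1, e2⟩ := v1
      apply h3 a0 (by rw [Fin.lt_def]; omega) (by rw [Fin.lt_def]; omega)
      constructor <;> rw [Fin.lt_def] <;> omega
  · apply AA_none
    rintro a b ha hb hbl ⟨h1, h2, h3⟩
    have hbl' : (w b : ℕ) = l := by rw [hbl]
    have hlt : (w a : ℕ) < w b := h2
    have hbk : (b : ℕ) ≠ k := by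
      intro h
      have : b = b0 := by ext; omega
      subst this
      omega
    have hbu : (b : ℕ) < k + u := by
      by_contra h
      have := w6 b (by omega)
      omega
    have e2 := w5 b (by omega) hbu
    have hj : j = 0 := by omega
    have hl2 := hl hj
    have e3 : (a : ℕ) + 1 < k := by
      by_contra h
      have := w3 a (by omega)
      omega
    have e4 := w1 a (by omega)
    apply h3 b0 (by rw [Fin.lt_def]; omega) (by rw [Fin.lt_def]; omega)
    constructor <;> rw [Fin.lt_def] <;> omega

/-- the surviving word -/
def lamW (k p i : ℕ) : ℕ := if i < p then k + i else k - 1 - (i - p)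

lemma HookW_cast {N m : ℕ} (r : Fin N → Fin N → Prop) (p : ℕ) (L : Fin (m + 1) → Fin N)
    (h : HookW r p L) : HookW r p (fun i : Fin m => L i.castSucc) :=
  ⟨fun i i' hi hp => h.1 i.castSucc i'.castSucc hi hp, fun i i' hp hi => h.2 i.castSucc i'.castSucc hp hi⟩

lemma eval_one {N : ℕ} (k p q : ℕ) (hp : 1 ≤ p) (hqk : q ≤ k) (hk : 1 ≤ k) (hkp : k + p ≤ N)
    (m : ℕ) (hm : m ≤ p + q - 1) : ∀ (g : Perm (Fin N)), IsV k (min m p) (m - p) g →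
    ∀ L : Fin m → Fin N, HookW (fun x y => x < y) p L →
    TT (AA (N := N) k) m L (bv 1) = if ∀ x, (L x : ℕ) = lamW k p x then bv g else 0 := by
  induction m with
  | zero =>
    intro g hg L _
    rw [IsV_one k g (by simpa using hg), if_pos (fun x => x.elim0)]
    rfl
  | succ m ih =>
    intro g hg L hL
    have hL' := HookW_cast _ p L hL
    have key : ∃ g', IsV k (min m p) (m - p) g' ∧ ((∀ x : Fin m, (L x.castSucc : ℕ) = lamW k p x) →
        AA k (L (Fin.last m)) (bv g') =
          if (L (Fin.last m) : ℕ) = lamW k p m then bv g else 0) := by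
      by_cases hmp : m < p
      · obtain ⟨g', h1, h2⟩ := step_inc k m hk (by omega) g (by
          have e1 : min (m + 1) p = m + 1 := by omega
          have e2 : m + 1 - p = 0 := by omega
          rwa [e1, e2] at hg)
        refine ⟨g', ?_, ?_⟩
        · have e1 : min m p = m := by omega
          have e2 : m - p = 0 := by omega
          rwa [e1, e2]
        · intro hx
          rw [h2, lamW, if_pos hmp]
          intro h1m
          have h3 := hx ⟨m - 1, by omega⟩
          simp only [lamW] at h3
          rw [if_pos (by omega)] at h3
          have h4 := hL.1 (Fin.castSucc ⟨m - 1, by omega⟩) (Fin.last m) (Fin.castSucc_lt_last _)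
            (by simpa using hmp)
          simp only [Fin.lt_def] at h4
          omega
      · obtain ⟨g', h1, h2⟩ := step_dec k p (m - p) (by omega) hp hkp g (by
          have e1 : min (m + 1) p = p := by omega
          have e2 : m + 1 - p = m - p + 1 := by omega
          rwa [e1, e2] at hg)
        refine ⟨g', ?_, ?_⟩
        · have e1 : min m p = p := by omega
          rwa [e1]
        · intro hx
          have h3 := hx ⟨m - 1, by omega⟩
          simp only [lamW] at h3
          have h4 := hL.2 (Fin.castSucc ⟨m - 1, by omega⟩) (Fin.last m)
            (by simp only [Fin.val_castSucc]; omega) (Fin.castSucc_lt_last _)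
          simp only [Fin.lt_def] at h4
          rw [h2, lamW, if_neg hmp]
          · intro h0
            rw [if_pos (by omega)] at h3
            omega
          · intro h0
            rw [if_neg (by omega)] at h3
            omega
    obtain ⟨g', h1, h2⟩ := key
    rw [TT, Module.End.mul_apply, ih (by omega) g' h1 _ hL']
    by_cases hx : ∀ x : Fin m, (L x.castSucc : ℕ) = lamW k p x
    · rw [if_pos hx, h2 hx]
      by_cases hl : (L (Fin.last m) : ℕ) = lamW k p m
      · rw [if_pos hl, if_pos]
        intro x
        refine Fin.lastCases ?_ ?_ x
        · simpa using hl
        · intro x; simpa using hx x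
      · rw [if_neg hl, if_neg]
        intro h
        apply hl
        simpa using h (Fin.last m)
    · rw [if_neg hx, map_zero, if_neg]
      intro h
      apply hx
      intro x
      simpa using h x.castSucc

lemma Kw_eval {N : ℕ} (k p q : ℕ) (hp : 1 ≤ p) (hq : 1 ≤ q) (hqk : q ≤ k) (hkp : k + p ≤ N)
    (g : Perm (Fin N)) (hg : IsV k p (q - 1) g) :
    Kw (AA (N := N) k) (fun x y => x < y) (p + q - 1) p (bv 1) = bv g := by
  have hk : 1 ≤ k := by omega
  have hg' : IsV k (min (p + q - 1) p) (p + q - 1 - p) g := by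
    have e1 : min (p + q - 1) p = p := by omega
    have e2 : p + q - 1 - p = q - 1 := by omega
    rwa [e1, e2]
  have H := eval_one k p q hp hqk hk hkp (p + q - 1) le_rfl g hg'
  have hlam : ∀ i : Fin (p + q - 1), lamW k p i < N := by
    intro i; rw [lamW]; split_ifs <;> omega
  set L0 : Fin (p + q - 1) → Fin N := fun i => ⟨lamW k p i, hlam i⟩ with hL0
  have hL0' : HookW (fun x y => x < y) p L0 := by
    constructor
    · intro i i' hi hp'
      simp only [hL0, Fin.mk_lt_mk, lamW]
      rw [if_pos (by omega), if_pos (by omega)]; omega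
    · intro i i' hi hi'
      simp only [hL0, Fin.mk_lt_mk, lamW]
      split_ifs <;> omega
  rw [Kw, LinearMap.sum_apply, Finset.sum_eq_single L0]
  · rw [if_pos hL0', H L0 hL0', if_pos (fun x => rfl)]
  · intro L _ hne
    split_ifs with h
    · rw [H L h, if_neg]
      intro h'
      apply hne
      funext x
      ext
      exact h' x
    · rfl
  · simp

lemma cycle_formPerm {N : ℕ} [NeZero N] (l : List ℕ) :
    cycleList N l = (l.map (pos N)).formPerm := by
  induction l with
  | nil => rfl
  | cons x l ih =>
    cases l with
    | nil => rfl
    | cons y l =>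
      rw [List.map_cons, List.map_cons, List.formPerm_cons_cons, ← List.map_cons, ← ih]
      simp [cycleList, t]

lemma hook_list {N : ℕ} [NeZero N] (k p q : ℕ) :
    (((List.range q).map fun i => k - q + 1 + i) ++
    ((List.range p).reverse.map fun i => k + 1 + i)).map (pos N) =
    List.ofFn (fun n : Fin (q + p) => pos N (if (n : ℕ) < q then k - q + 1 + n else k + p - (n - q))) := by
  apply List.ext_getElem
  · simp
  · intro n h1 h2
    simp at h1
    rw [List.getElem_map, List.getElem_ofFn]
    congr 1
    by_cases h : n < q
    · rw [List.getElem_append_left (by simpa using h)]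
      simp [h]
    · rw [List.getElem_append_right (by simpa using h)]
      simp [h]; omega

lemma IsV_hook {N : ℕ} [NeZero N] (k p q : ℕ) (hp : 1 ≤ p) (hq : 1 ≤ q) (hqk : q ≤ k) (hkp : k + p ≤ N) :
    IsV k p (q - 1) (hookPerm N k p q) := by
  rw [hookPerm, cycle_formPerm, hook_list]
  set f : Fin (q + p) → Fin N := fun n => pos N (if (n : ℕ) < q then k - q + 1 + n else k + p - (n - q)) with hf
  have fv : ∀ n : Fin (q + p), (f n : ℕ) = if (n : ℕ) < q then k - q + n else k + p - 1 - (n - q) := by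
    intro n
    simp only [hf]
    rw [pos_val]
    · split_ifs <;> omega
    · split_ifs <;> omega
    · split_ifs <;> omega
  have finj : Function.Injective f := by
    intro a b hab
    have := congrArg Fin.val hab
    rw [fv, fv] at this
    ext
    split_ifs at this <;> omega
  have nd : (List.ofFn f).Nodup := List.nodup_ofFn.2 finj
  have hlast : (q + p - 1) < q + p := by omega
  have a1 : ∀ n (hn : n + 1 < q + p), (List.ofFn f).formPerm (f ⟨n, by omega⟩) = f ⟨n + 1, hn⟩ := by
    intro n hn
    have := List.formPerm_apply_lt_getElem (List.ofFn f) nd n (by simpa using hn)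
    simpa using this
  have a2 : (List.ofFn f).formPerm (f ⟨q + p - 1, hlast⟩) = f ⟨0, by omega⟩ := by
    have := List.formPerm_apply_getElem (List.ofFn f) nd (q + p - 1) (by simpa using hlast)
    have e : (q + p - 1 + 1) % (q + p) = 0 := by
      rw [show q + p - 1 + 1 = q + p by omega, Nat.mod_self]
    simpa [e] using this
  have a3 : ∀ x, (∀ n, f n ≠ x) → (List.ofFn f).formPerm x = x := by
    intro x hx
    apply List.formPerm_apply_of_notMem
    rw [List.mem_ofFn]
    rintro ⟨n, hn⟩
    exact hx n hn
  intro x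
  by_cases h1 : (x : ℕ) < k - q ∨ k + p ≤ (x : ℕ)
  · rw [a3 x]
    · omega
    · intro n hn
      have := congrArg Fin.val hn
      rw [fv] at this
      split_ifs at this <;> omega
  by_cases h2 : (x : ℕ) = k
  · have : x = f ⟨q + p - 1, hlast⟩ := by
      ext; rw [fv]; simp only; rw [if_neg (by omega)]; omega
    rw [this, a2, ← this, fv]
    simp only
    rw [if_pos (by omega)]
    omega
  by_cases h3 : (x : ℕ) < k
  · have : x = f ⟨x - (k - q), by omega⟩ := by
      ext; rw [fv]; simp only; rw [if_pos (by omega)]; omega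
    have e := a1 (x - (k - q)) (by omega)
    rw [← this] at e
    rw [e, fv]
    simp only
    split_ifs <;> omega
  · have : x = f ⟨q + (k + p - 1 - x), by omega⟩ := by
      ext; rw [fv]; simp only; rw [if_neg (by omega)]; omega
    have e := a1 (q + (k + p - 1 - x)) (by omega)
    rw [← this] at e
    rw [e, fv]
    simp only
    rw [if_neg (by omega)]
    omega

/-- algebraic form of the theorem -/
lemma hook_alg {N : ℕ} [NeZero N] (k p q : ℕ) (hp : 1 ≤ p) (hq : 1 ≤ q) (hqk : q ≤ k)
    (hkp : k + p ≤ N) (w : Perm (Fin N)) :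
    SS N w * SS N (hookPerm N k p q) =
      phi N (Kw (AA (N := N) k) (fun x y => x < y) (p + q - 1) p (bv w)) ∧
    SS N w * SS N (hookPerm N k p q) =
      phi N (Kw (AA (N := N) k) (fun x y => y < x) (p + q - 1) q (bv w)) := by
  obtain ⟨r, h1, h2⟩ := InB_hook (N := N) k (by omega) q p hp hq
  have h3 := h1 (bv 1)
  rw [Kw_eval k p q hp hq hqk hkp _ (IsV_hook k p q hp hq hqk hkp), phi_bv, phi_bv] at h3
  have h4 : SS N 1 = 1 := by rw [SS, schub_one, map_one]
  rw [h4, mul_one] at h3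
  rw [h1, h2, phi_bv, h3, mul_comm]
  exact ⟨rfl, rfl⟩

lemma tProd_succ {N : ℕ} [NeZero N] (a b : ℕ → ℕ) (i : ℕ) :
    tProd N a b (i + 1) = tProd N a b i * t N (a i) (b i) := by
  simp [tProd, List.range_succ]

lemma tProd_congr {N : ℕ} [NeZero N] (a b a' b' : ℕ → ℕ) (i : ℕ)
    (h : ∀ j, j < i → a j = a' j ∧ b j = b' j) : tProd N a b i = tProd N a' b' i := by
  induction i with
  | zero => simp [tProd]
  | succ i ih =>
    rw [tProd_succ, tProd_succ, ih (fun j hj => h j (by omega)), (h i (by omega)).1,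
      (h i (by omega)).2]

lemma label_eq {N : ℕ} [NeZero N] (w : Perm (Fin N)) (a b : ℕ → ℕ) (i : ℕ) :
    label w a b i = ((w * tProd N a b i) (pos N (b i)) : ℕ) + 1 := by
  rw [label, val, tProd_succ, ← mul_assoc, Perm.mul_apply, t, swap_apply_left]

lemma label_congr {N : ℕ} [NeZero N] (w : Perm (Fin N)) (a b a' b' : ℕ → ℕ) (i : ℕ)
    (h : ∀ j, j < i + 1 → a j = a' j ∧ b j = b' j) : label w a b i = label w a' b' i := by
  rw [label, label, tProd_congr a b a' b' (i + 1) h, (h i (by omega)).1]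

lemma StepOK_congr {N : ℕ} [NeZero N] (k m : ℕ) (w : Perm (Fin N)) (a b a' b' : ℕ → ℕ)
    (h : ∀ j, j < m → a j = a' j ∧ b j = b' j) (hs : StepOK N k m w a b) :
    StepOK N k m w a' b' := by
  refine ⟨fun i hi => ?_, fun i hi => ?_⟩
  · rw [← (h i hi).1, ← (h i hi).2]
    exact hs.1 i hi
  · rw [← tProd_congr a b a' b' i (fun j hj => h j (by omega))]
    exact hs.2 i hi

lemma StepOK_succ {N : ℕ} [NeZero N] (k m : ℕ) (w : Perm (Fin N)) (a b : ℕ → ℕ) :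
    StepOK N k (m + 1) w a b ↔ StepOK N k m w a b ∧
      (1 ≤ a m ∧ a m ≤ k ∧ k < b m ∧ b m ≤ N) ∧
      cov (w * tProd N a b m) (pos N (a m)) (pos N (b m)) := by
  have key : (1 ≤ a m ∧ a m ≤ k ∧ k < b m ∧ b m ≤ N) → len (w * tProd N a b m) = len w + m →
      (len (w * tProd N a b (m + 1)) = len w + (m + 1) ↔
        cov (w * tProd N a b m) (pos N (a m)) (pos N (b m))) := by
    intro h hl
    rw [← len_cov, hl, tProd_succ, ← mul_assoc, t, add_assoc]
    rw [Fin.lt_def, pos_val _ (by omega) (by omega), pos_val _ (by omega) (by omega)]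
    omega
  constructor
  · rintro ⟨h1, h2⟩
    have hb := h1 m (by omega)
    exact ⟨⟨fun i hi => h1 i (by omega), fun i hi => h2 i (by omega)⟩, hb,
      (key hb (h2 m (by omega))).1 (h2 (m + 1) le_rfl)⟩
  · rintro ⟨⟨h1, h2⟩, hb, hc⟩
    refine ⟨fun i hi => ?_, fun i hi => ?_⟩
    · rcases Nat.lt_succ_iff_lt_or_eq.1 hi with h | h
      · exact h1 i h
      · subst h; exact hb
    · rcases Nat.lt_or_eq_of_le hi with h | h
      · exact h2 i (by omega)
      · subst h; exact (key hb (h2 m le_rfl)).2 hc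

/-- paths with prescribed labels -/
def PP {N : ℕ} [NeZero N] (k m : ℕ) (w : Perm (Fin N)) (L : Fin m → Fin N)
    (ab : (ℕ → ℕ) × (ℕ → ℕ)) : Prop :=
  StepOK N k m w ab.1 ab.2 ∧ (∀ i, m ≤ i → ab.1 i = 0 ∧ ab.2 i = 0) ∧
    ∀ i : Fin m, label w ab.1 ab.2 i = (L i : ℕ) + 1

/-- endpoint of a path -/
def eD {N : ℕ} [NeZero N] (m : ℕ) (w : Perm (Fin N)) (ab : (ℕ → ℕ) × (ℕ → ℕ)) : Perm (Fin N) :=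
  w * tProd N ab.1 ab.2 m

/-- extend a path by one step -/
def eX {N : ℕ} (m : ℕ) (ab : (ℕ → ℕ) × (ℕ → ℕ)) (a b : Fin N) : (ℕ → ℕ) × (ℕ → ℕ) :=
  (Function.update ab.1 m ((a : ℕ) + 1), Function.update ab.2 m ((b : ℕ) + 1))

lemma eX_agree {N : ℕ} (m : ℕ) (ab : (ℕ → ℕ) × (ℕ → ℕ)) (a b : Fin N) (j : ℕ) (hj : j < m) :
    ab.1 j = (eX m ab a b).1 j ∧ ab.2 j = (eX m ab a b).2 j := by
  simp [eX, Function.update_of_ne (Nat.ne_of_lt hj)]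

lemma eD_eX {N : ℕ} [NeZero N] (m : ℕ) (w : Perm (Fin N)) (ab : (ℕ → ℕ) × (ℕ → ℕ)) (a b : Fin N) :
    eD (m + 1) w (eX m ab a b) = eD m w ab * swap a b := by
  rw [eD, eD, tProd_succ, ← tProd_congr _ _ _ _ m (fun j hj => eX_agree m ab a b j hj), mul_assoc]
  simp [eX, t, pos_succ]

lemma PP_succ {N : ℕ} [NeZero N] (k m : ℕ) (w : Perm (Fin N)) (L : Fin (m + 1) → Fin N)
    (ab' : (ℕ → ℕ) × (ℕ → ℕ)) :
    PP k (m + 1) w L ab' ↔ ∃ ab, ∃ a : Fin N, (PP k m w (fun i => L i.castSucc) ab ∧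
      ((a : ℕ) < k ∧ k ≤ ((eD m w ab).symm (L (Fin.last m)) : ℕ) ∧
        cov (eD m w ab) a ((eD m w ab).symm (L (Fin.last m))))) ∧
      eX m ab a ((eD m w ab).symm (L (Fin.last m))) = ab' := by
  constructor
  · rintro ⟨h1, h2, h3⟩
    rw [StepOK_succ] at h1
    obtain ⟨h1, hb, hc⟩ := h1
    have hag : ∀ j, j < m → ab'.1 j = (Function.update ab'.1 m 0) j ∧
        ab'.2 j = (Function.update ab'.2 m 0) j := by
      intro j hj
      simp [Function.update_of_ne (Nat.ne_of_lt hj)]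
    have hE : eD m w (Function.update ab'.1 m 0, Function.update ab'.2 m 0) =
        w * tProd N ab'.1 ab'.2 m := by
      rw [eD, ← tProd_congr _ _ _ _ m hag]
    have hl : (eD m w (Function.update ab'.1 m 0, Function.update ab'.2 m 0)).symm (L (Fin.last m))
        = pos N (ab'.2 m) := by
      rw [hE, Equiv.symm_apply_eq]
      have := h3 (Fin.last m)
      rw [label_eq] at this
      ext
      simp only [Fin.val_last] at this
      omega
    refine ⟨(Function.update ab'.1 m 0, Function.update ab'.2 m 0), pos N (ab'.1 m),
      ⟨⟨StepOK_congr k m w _ _ _ _ hag h1, ?_, ?_⟩, ?_, ?_, ?_⟩, ?_⟩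
    · intro i hi
      by_cases h : i = m
      · subst h; simp
      · have := h2 i (by omega)
        simp [Function.update_of_ne h, this]
    · intro i
      rw [← label_congr w ab'.1 ab'.2 _ _ i (fun j hj => hag j (by omega))]
      exact h3 i.castSucc
    · rw [pos_val _ (by omega) (by omega)]; omega
    · rw [hl, pos_val _ (by omega) (by omega)]; omega
    · rw [hl, hE]; exact hc
    · rw [hl, eX, pos_val _ (by omega) (by omega), pos_val _ (by omega) (by omega)]
      ext i
      · by_cases h : i = m
        · subst h; simp; omega
        · simp [Function.update_of_ne h]
      · by_cases h : i = m
        · subst h; simp; omega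
        · simp [Function.update_of_ne h]
  · rintro ⟨ab, a, ⟨⟨h1, h2, h3⟩, ha, hb, hc⟩, rfl⟩
    have hl := Equiv.apply_symm_apply (eD m w ab) (L (Fin.last m))
    set b := (eD m w ab).symm (L (Fin.last m)) with hbdef
    have hag := eX_agree m ab a b
    have e1 : (eX m ab a b).1 m = a + 1 := by simp [eX]
    have e2 : (eX m ab a b).2 m = b + 1 := by simp [eX]
    have hE : w * tProd N (eX m ab a b).1 (eX m ab a b).2 m = eD m w ab := by
      rw [eD, ← tProd_congr _ _ _ _ m hag]
    refine ⟨?_, ?_, ?_⟩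
    · rw [StepOK_succ, hE, e1, e2, pos_succ, pos_succ]
      exact ⟨StepOK_congr k m w _ _ _ _ hag h1, by omega, hc⟩
    · intro i hi
      have := h2 i (by omega)
      simp [eX, Function.update_of_ne (show i ≠ m by omega), this]
    · intro i
      induction i using Fin.lastCases with
      | last =>
        rw [label_eq, Fin.val_last, hE, e2, pos_succ, hl]
      | cast i =>
        rw [← h3 i]
        exact (label_congr w _ _ _ _ i (fun j hj => hag j (by omega))).symm

lemma eX_inj {N : ℕ} [NeZero N] (k m : ℕ) (w : Perm (Fin N)) (L L' : Fin m → Fin N)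
    (ab ab' : (ℕ → ℕ) × (ℕ → ℕ)) (a b a' b' : Fin N) (h : PP k m w L ab) (h' : PP k m w L' ab')
    (he : eX m ab a b = eX m ab' a' b') : ab = ab' ∧ a = a' := by
  have f1 : ∀ i, (eX m ab a b).1 i = (eX m ab' a' b').1 i := fun i => by rw [he]
  have f2 : ∀ i, (eX m ab a b).2 i = (eX m ab' a' b').2 i := fun i => by rw [he]
  constructor
  · ext i
    · by_cases hi : i < m
      · rw [(eX_agree m ab a b i hi).1, f1, ← (eX_agree m ab' a' b' i hi).1]
      · rw [(h.2.1 i (by omega)).1, (h'.2.1 i (by omega)).1]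
    · by_cases hi : i < m
      · rw [(eX_agree m ab a b i hi).2, f2, ← (eX_agree m ab' a' b' i hi).2]
      · rw [(h.2.1 i (by omega)).2, (h'.2.1 i (by omega)).2]
  · have := f1 m
    simp [eX] at this
    exact Fin.ext this

lemma TT_paths {N : ℕ} [NeZero N] (k m : ℕ) (w : Perm (Fin N)) (L : Fin m → Fin N) :
    ∃ F : Finset ((ℕ → ℕ) × (ℕ → ℕ)), (∀ ab, ab ∈ F ↔ PP k m w L ab) ∧
      TT (AA k) m L (bv w) = ∑ ab ∈ F, bv (eD m w ab) := by
  induction m with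
  | zero =>
    refine ⟨{(fun _ => 0, fun _ => 0)}, ?_, ?_⟩
    · intro ab
      rw [Finset.mem_singleton]
      constructor
      · rintro rfl
        refine ⟨⟨fun i hi => by omega, fun i hi => ?_⟩, fun i _ => ⟨rfl, rfl⟩, fun i => i.elim0⟩
        obtain rfl : i = 0 := by omega
        simp [tProd]
      · rintro ⟨_, h, _⟩
        ext i
        · exact (h i (by omega)).1
        · exact (h i (by omega)).2
    · simp [TT, eD, tProd]
  | succ m ih =>
    obtain ⟨F, hF, hs⟩ := ih (fun i => L i.castSucc)
    set C : ((ℕ → ℕ) × (ℕ → ℕ)) × Fin N → Prop := fun x =>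
      ((x.2 : ℕ) < k ∧ k ≤ ((eD m w x.1).symm (L (Fin.last m)) : ℕ) ∧
        cov (eD m w x.1) x.2 ((eD m w x.1).symm (L (Fin.last m)))) with hC
    set G : ((ℕ → ℕ) × (ℕ → ℕ)) × Fin N → ((ℕ → ℕ) × (ℕ → ℕ)) := fun x =>
      eX m x.1 x.2 ((eD m w x.1).symm (L (Fin.last m))) with hG
    refine ⟨((F ×ˢ Finset.univ).filter C).image G, ?_, ?_⟩
    · intro ab
      rw [PP_succ, Finset.mem_image]
      constructor
      · rintro ⟨⟨x, a⟩, hx, rfl⟩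
        rw [Finset.mem_filter, Finset.mem_product] at hx
        exact ⟨x, a, ⟨(hF x).1 hx.1.1, hx.2⟩, rfl⟩
      · rintro ⟨x, a, ⟨h1, h2⟩, h3⟩
        refine ⟨(x, a), ?_, h3⟩
        rw [Finset.mem_filter, Finset.mem_product]
        exact ⟨⟨(hF x).2 h1, Finset.mem_univ _⟩, h2⟩
    · rw [Finset.sum_image, Finset.sum_filter, Finset.sum_product, TT, Module.End.mul_apply, hs,
        map_sum]
      · apply Finset.sum_congr rfl
        intro ab _
        rw [AA_bv]
        by_cases hk : k ≤ ((eD m w ab).symm (L (Fin.last m)) : ℕ)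
        · rw [if_pos hk]
          apply Finset.sum_congr rfl
          intro a _
          by_cases ha : (a : ℕ) < k
          · rw [if_pos ha, op_bv]
            by_cases hc : cov (eD m w ab) a ((eD m w ab).symm (L (Fin.last m)))
            · rw [if_pos hc, if_pos (show C (ab, a) from ⟨ha, hk, hc⟩), eD_eX]
            · rw [if_neg hc, if_neg (fun h : C (ab, a) => hc h.2.2)]
          · rw [if_neg ha, if_neg (fun h : C (ab, a) => ha h.1)]
        · rw [if_neg hk, Finset.sum_eq_zero]
          intro a _
          rw [if_neg (fun h : C (ab, a) => hk h.2.1)]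
      · rintro ⟨x, a⟩ hx ⟨x', a'⟩ hx' he
        rw [Finset.mem_coe, Finset.mem_filter, Finset.mem_product] at hx hx'
        have := eX_inj k m w _ _ x x' a _ a' _ ((hF _).1 hx.1.1) ((hF _).1 hx'.1.1) he
        rw [this.1, this.2]

lemma PP_of {N : ℕ} [NeZero N] (k m : ℕ) (w : Perm (Fin N)) (ab : (ℕ → ℕ) × (ℕ → ℕ))
    (h1 : StepOK N k m w ab.1 ab.2) (h2 : ∀ i, m ≤ i → ab.1 i = 0 ∧ ab.2 i = 0) :
    ∃ L, PP k m w L ab :=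
  ⟨fun i => (w * tProd N ab.1 ab.2 i) (pos N (ab.2 i)), h1, h2, fun i => label_eq _ _ _ _⟩

lemma Kw_paths {N : ℕ} [NeZero N] (k m p : ℕ) (w : Perm (Fin N)) (r : Fin N → Fin N → Prop)
    (P : Perm (Fin N) → Set ((ℕ → ℕ) × (ℕ → ℕ)))
    (hP : ∀ w' ab, ab ∈ P w' ↔ ∃ L, HookW r p L ∧ PP k m w L ab ∧ w' = eD m w ab) :
    phi N (Kw (AA k) r m p (bv w)) = ∑ w', (P w').ncard • SS N w' := by
  choose F hF hs using TT_paths k m w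
  set G : Finset ((ℕ → ℕ) × (ℕ → ℕ)) := (Finset.univ.filter (fun L => HookW r p L)).biUnion F with hG
  have hG1 : Kw (AA k) r m p (bv w) = ∑ ab ∈ G, bv (eD m w ab) := by
    rw [hG, Finset.sum_biUnion, Finset.sum_filter, Kw, LinearMap.sum_apply]
    · apply Finset.sum_congr rfl
      intro L _
      by_cases h : HookW r p L
      · rw [if_pos h, if_pos h, hs]
      · rw [if_neg h, if_neg h, LinearMap.zero_apply]
    · intro L _ L' _ hne
      rw [Function.onFun, Finset.disjoint_left]
      intro ab h h'
      apply hne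
      have e := ((hF _ _).1 h).2.2
      have e' := ((hF _ _).1 h').2.2
      ext i
      have := e i
      have := e' i
      omega
  have hG2 : ∀ w', (P w').ncard = (G.filter (fun ab => eD m w ab = w')).card := by
    intro w'
    rw [← Set.ncard_coe_finset]
    congr 1
    ext ab
    rw [hP, Finset.mem_coe, Finset.mem_filter, hG, Finset.mem_biUnion]
    constructor
    · rintro ⟨L, h1, h2, h3⟩
      exact ⟨⟨L, Finset.mem_filter.2 ⟨Finset.mem_univ _, h1⟩, (hF _ _).2 h2⟩, h3.symm⟩
    · rintro ⟨⟨L, h1, h2⟩, h3⟩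
      exact ⟨L, (Finset.mem_filter.1 h1).2, (hF _ _).1 h2, h3.symm⟩
  rw [hG1, map_sum, ← Finset.sum_fiberwise G (fun ab => eD m w ab)]
  apply Finset.sum_congr rfl
  intro w' _
  rw [hG2, ← Finset.sum_const]
  apply Finset.sum_congr rfl
  intro ab hab
  rw [phi_bv, (Finset.mem_filter.1 hab).2]

lemma inc_mem {N : ℕ} [NeZero N] (k m p : ℕ) (hpm : p ≤ m) (w w' : Perm (Fin N)) (ab) :
    ab ∈ IncDecPaths N k m p w w' ↔
      ∃ L, HookW (fun x y => x < y) p L ∧ PP k m w L ab ∧ w' = eD m w ab := by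
  constructor
  · rintro ⟨⟨h1, h2, h3⟩, h4, h5⟩
    obtain ⟨L, hL⟩ := PP_of k m w ab h1 h3
    refine ⟨L, ⟨fun i i' hi hp => ?_, fun i i' hp hi => ?_⟩, hL, h2⟩
    · have := h4 i i' hi hp
      rw [hL.2.2, hL.2.2] at this
      exact Nat.lt_of_succ_lt_succ this
    · have := h5 i i' hp hi i'.2
      rw [hL.2.2, hL.2.2] at this
      exact Nat.lt_of_succ_lt_succ this
  · rintro ⟨L, ⟨h1, h2⟩, ⟨h3, h4, h5⟩, h6⟩
    refine ⟨⟨h3, h6, h4⟩, fun i j hij hj => ?_, fun i j hi hij hj => ?_⟩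
    · have := h1 ⟨i, by omega⟩ ⟨j, by omega⟩ hij hj
      rw [h5 ⟨i, by omega⟩, h5 ⟨j, by omega⟩]
      exact Nat.succ_lt_succ this
    · have := h2 ⟨i, by omega⟩ ⟨j, by omega⟩ hi hij
      rw [h5 ⟨i, by omega⟩, h5 ⟨j, by omega⟩]
      exact Nat.succ_lt_succ this

lemma dec_mem {N : ℕ} [NeZero N] (k m p : ℕ) (hpm : p ≤ m) (w w' : Perm (Fin N)) (ab) :
    ab ∈ DecIncPaths N k m p w w' ↔
      ∃ L, HookW (fun x y => y < x) p L ∧ PP k m w L ab ∧ w' = eD m w ab := by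
  constructor
  · rintro ⟨⟨h1, h2, h3⟩, h4, h5⟩
    obtain ⟨L, hL⟩ := PP_of k m w ab h1 h3
    refine ⟨L, ⟨fun i i' hi hp => ?_, fun i i' hp hi => ?_⟩, hL, h2⟩
    · have := h4 i i' hi hp
      rw [hL.2.2, hL.2.2] at this
      exact Nat.lt_of_succ_lt_succ this
    · have := h5 i i' hp hi i'.2
      rw [hL.2.2, hL.2.2] at this
      exact Nat.lt_of_succ_lt_succ this
  · rintro ⟨L, ⟨h1, h2⟩, ⟨h3, h4, h5⟩, h6⟩
    refine ⟨⟨h3, h6, h4⟩, fun i j hij hj => ?_, fun i j hi hij hj => ?_⟩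
    · have := h1 ⟨i, by omega⟩ ⟨j, by omega⟩ hij hj
      rw [h5 ⟨i, by omega⟩, h5 ⟨j, by omega⟩]
      exact Nat.succ_lt_succ this
    · have := h2 ⟨i, by omega⟩ ⟨j, by omega⟩ hi hij
      rw [h5 ⟨i, by omega⟩, h5 ⟨j, by omega⟩]
      exact Nat.succ_lt_succ this

/-- Multiplication by a hook Schubert polynomial: with `m = p+q-1`,
`𝔖_w · 𝔖_{h[k;p,q]} = Σ_γ 𝔖_{end(γ)}`, the sum over all paths of length `m` in the
`k`-Bruhat order starting at `w` whose labels increase for the first `p` steps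
and then decrease; and the same identity holds summing over paths whose labels
decrease for the first `q` steps and then increase.  Each sum is expressed as
`Σ_{w'} (#paths from w to w') • 𝔖_{w'}` (here the paper's `n` is `n+1`). -/
theorem hook_formula (n k p q : ℕ) (hp : 1 ≤ p) (hq : 1 ≤ q) (hqk : q ≤ k)
    (hkp : k + p ≤ n + 1) (hk : 1 ≤ k) (w : Equiv.Perm (Fin (n + 1))) :
    (SS (n + 1) w * SS (n + 1) (hookPerm (n + 1) k p q) =
      ∑ w' : Equiv.Perm (Fin (n + 1)),
        (IncDecPaths (n + 1) k (p + q - 1) p w w').ncard • SS (n + 1) w') ∧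
    (SS (n + 1) w * SS (n + 1) (hookPerm (n + 1) k p q) =
      ∑ w' : Equiv.Perm (Fin (n + 1)),
        (DecIncPaths (n + 1) k (p + q - 1) q w w').ncard • SS (n + 1) w') := by
  obtain ⟨h1, h2⟩ := hook_alg (N := n + 1) k p q hp hq hqk hkp w
  refine ⟨h1.trans ?_, h2.trans ?_⟩
  · exact Kw_paths k _ p w _ _ (fun w' ab => inc_mem k _ p (by omega) w w' ab)
  · exact Kw_paths k _ q w _ _ (fun w' ab => dec_mem k _ q (by omega) w w' ab)

end SchubertPieri
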